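/- For every n ≥ 1 and every k ≥ 0, the Tamari lattice Tam_n and the Dyck lattice Dyck_n have the same number of linear intervals of height k. -/

import Mathlib

/-!
Common definitions.  A letter of a word is a `Bool`: `true` is an up step `u`,
`false` is a down step `d`.  Positions in words are 0-based.
-/

/-- A (possibly empty) Dyck word: as many `u`'s as `d`'s, and every
prefix has at least as many `u`'s as `d`'s. -/
def IsDyckPath (w : List Bool) : Prop :=
  w.count true = w.count false ∧ ∀ p, p <+: w → p.count false ≤ p.count true

/-- A Dyck word of size `n`: `n` up steps, `n` down steps, every prefix has
at least as many `u`'s as `d`'s. -/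
def IsDyckWord (n : ℕ) (w : List Bool) : Prop :=
  w.count true = n ∧ w.count false = n ∧ ∀ p, p <+: w → p.count false ≤ p.count true

/-- The set of Dyck words of size `n`. -/
def DyckSet (n : ℕ) : Set (List Bool) := {w | IsDyckWord n w}

/-- An increment function: a `{0,1}`-valued function (the paper's `δ : {1,…,n} → {0,1}`;
only the values on `{1,…,n}` are ever used). -/
def IsIncFun (δ : ℕ → ℤ) : Prop := ∀ i, δ i = 0 ∨ δ i = 1

/-- The 0-based position in `w` of the `i`-th up step `u_i` (`i` is 1-based). -/
def upPos (w : List Bool) (i : ℕ) : ℕ :=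
  ((List.range w.length).filter fun q => w.getD q false = true).getD (i - 1) 0

/-- `h_i(w)`: the (1-based, between 1 and 2n) position of the up step `u_i` in `w`. -/
def hpos (w : List Bool) (i : ℕ) : ℕ := upPos w i + 1

/-- The change of δ-altitude produced by the letter at position `q` of `w`:
the up step `u_i` contributes `δ i`, a down step contributes `-1`. -/
def stepVal (δ : ℕ → ℤ) (w : List Bool) (q : ℕ) : ℤ :=
  if w.getD q false = true then δ ((w.take (q + 1)).count true) else -1

/-- The δ-elevation of the factor of `w` occupying positions `a, …, b-1`. -/
def elev (δ : ℕ → ℤ) (w : List Bool) (a b : ℕ) : ℤ :=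
  ∑ q ∈ Finset.Ico a b, stepVal δ w q

/-- `C` is the δ-excursion of the up step of `w` at position `p`:
the smallest (nonempty) factor of `w` starting at `p` whose δ-elevation is `0`. -/
def IsDeltaExcAt (δ : ℕ → ℤ) (w : List Bool) (p : ℕ) (C : List Bool) : Prop :=
  w.getD p false = true ∧
  ∃ m, 0 < m ∧ p + m ≤ w.length ∧ C = (w.drop p).take m ∧
    elev δ w p (p + m) = 0 ∧ ∀ m', 0 < m' → m' < m → elev δ w p (p + m') ≠ 0

/-- `C` is the excursion of the up step of `w` at position `p`: the smallest factor
of `w` starting at `p` that is itself a Dyck word. -/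
def IsExcursionAt (w : List Bool) (p : ℕ) (C : List Bool) : Prop :=
  w.getD p false = true ∧
  ∃ m, 0 < m ∧ p + m ≤ w.length ∧ C = (w.drop p).take m ∧ IsDyckPath C ∧
    ∀ m', 0 < m' → m' < m → ¬ IsDyckPath ((w.drop p).take m')

/-- `ℓ_i(w; δ)`: the length of the δ-excursion of `u_i` in `w`. -/
noncomputable def excLen (δ : ℕ → ℤ) (w : List Bool) (i : ℕ) : ℕ :=
  sInf {m | 0 < m ∧ elev δ w (upPos w i) (upPos w i + m) = 0}

/-- `Q` is the δ-rotation of `P` at some up step: `P = A d C B` with `d u_i` a valley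
and `C` the δ-excursion of `u_i`, and `Q = A C d B`. -/
def DeltaRot (δ : ℕ → ℤ) (P Q : List Bool) : Prop :=
  ∃ A C B, P = A ++ false :: (C ++ B) ∧ Q = A ++ (C ++ false :: B) ∧
    IsDeltaExcAt δ P (A.length + 1) C

/-- The alt-Tamari order `Tam^δ`: reflexive transitive closure of δ-rotations. -/
def altLE (δ : ℕ → ℤ) : List Bool → List Bool → Prop :=
  Relation.ReflTransGen (DeltaRot δ)

/-- The Tamari order: the alt-Tamari order for `δ ≡ 1` (the δ-excursion of any up step
is then its excursion). -/
def tamLE : List Bool → List Bool → Prop := altLE fun _ => 1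

/-- The height (number of `u`'s minus number of `d`'s) of the length-`j` prefix of `w`. -/
def prefHeight (w : List Bool) (j : ℕ) : ℤ :=
  ((w.take j).count true : ℤ) - ((w.take j).count false : ℤ)

/-- The Dyck (inclusion) order: every prefix height of `P` is at most that of `Q`. -/
def dyckLE (P Q : List Bool) : Prop := ∀ j, prefHeight P j ≤ prefHeight Q j

/-- Strict version of a relation `le`. -/
def ltOf (le : List Bool → List Bool → Prop) (P Q : List Bool) : Prop :=
  le P Q ∧ ¬ le Q P

/-- There is a strict chain `P = c 0 < c 1 < ⋯ < c k = Q` inside `S`. -/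
def HasChainIn (S : Set (List Bool)) (le : List Bool → List Bool → Prop)
    (P Q : List Bool) (k : ℕ) : Prop :=
  ∃ c : ℕ → List Bool, c 0 = P ∧ c k = Q ∧ (∀ i ≤ k, c i ∈ S) ∧
    ∀ i < k, ltOf le (c i) (c (i + 1))

/-- The interval `[P,Q]` of the poset `(S, le)` has height `k`: `k` is the maximal
length of a chain from `P` to `Q`. -/
def IntervalHeight (S : Set (List Bool)) (le : List Bool → List Bool → Prop)
    (P Q : List Bool) (k : ℕ) : Prop :=
  HasChainIn S le P Q k ∧ ∀ m, HasChainIn S le P Q m → m ≤ k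

/-- The interval `[P,Q]` of the poset `(S, le)` is linear: it is totally ordered. -/
def LinearInterval (S : Set (List Bool)) (le : List Bool → List Bool → Prop)
    (P Q : List Bool) : Prop :=
  P ∈ S ∧ Q ∈ S ∧ le P Q ∧
  ∀ R R', R ∈ S → R' ∈ S → le P R → le R Q → le P R' → le R' Q → le R R' ∨ le R' R

/-- `Q` covers `P` in the poset `(S, le)`. -/
def CovIn (S : Set (List Bool)) (le : List Bool → List Bool → Prop)
    (P Q : List Bool) : Prop :=
  P ∈ S ∧ Q ∈ S ∧ ltOf le P Q ∧ ∀ R ∈ S, ¬ (ltOf le P R ∧ ltOf le R Q)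

/-- The number of valleys (factors `du`) of `w`. -/
def valleys (w : List Bool) : ℕ :=
  ((List.range w.length).filter fun q => !w.getD q true && w.getD (q + 1) false).length

/-! ### Heights of words -/

/-- The height of a word: its number of `u`'s minus its number of `d`'s. -/
def wordHeight (w : List Bool) : ℤ := (w.count true : ℤ) - (w.count false : ℤ)

@[simp] theorem wordHeight_nil : wordHeight [] = 0 := by simp [wordHeight]

@[simp] theorem wordHeight_cons_true (w : List Bool) :
    wordHeight (true :: w) = wordHeight w + 1 := by
  simp [wordHeight]; ring

@[simp] theorem wordHeight_cons_false (w : List Bool) :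
    wordHeight (false :: w) = wordHeight w - 1 := by
  simp [wordHeight]; ring

@[simp] theorem wordHeight_append (v w : List Bool) :
    wordHeight (v ++ w) = wordHeight v + wordHeight w := by
  simp [wordHeight]; ring

@[simp] theorem wordHeight_replicate_false (k : ℕ) :
    wordHeight (List.replicate k false) = -k := by
  simp [wordHeight, List.count_replicate]

theorem neg_length_le_wordHeight (w : List Bool) : -(w.length : ℤ) ≤ wordHeight w := by
  induction w with
  | nil => simp
  | cons a w ih => cases a <;> simp <;> omega

theorem prefHeight_eq (w : List Bool) (j : ℕ) : prefHeight w j = wordHeight (w.take j) := rfl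

theorem prefHeight_length_append (v w : List Bool) :
    prefHeight (v ++ w) v.length = wordHeight v := by
  simp [prefHeight_eq]

theorem prefHeight_cons_succ (a : Bool) (w : List Bool) (j : ℕ) :
    prefHeight (a :: w) (j + 1) = wordHeight [a] + prefHeight w j := by
  simp only [prefHeight_eq, List.take_succ_cons]
  cases a <;> simp <;> ring

theorem prefHeight_zero (w : List Bool) : prefHeight w 0 = 0 := by simp [prefHeight_eq]

theorem prefHeight_add_length (v w : List Bool) (j : ℕ) :
    prefHeight (v ++ w) (v.length + j) = wordHeight v + prefHeight w j := by
  simp [prefHeight_eq, List.take_append, List.take_of_length_le]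

theorem dyckLE_refl (P : List Bool) : dyckLE P P := fun _ => le_rfl

theorem dyckLE.trans {P Q R : List Bool} (h : dyckLE P Q) (h' : dyckLE Q R) : dyckLE P R :=
  fun j => (h j).trans (h' j)

theorem dyckLE_cons_iff (a : Bool) (v w : List Bool) :
    dyckLE (a :: v) (a :: w) ↔ dyckLE v w := by
  constructor
  · intro h j
    have := h (j + 1)
    rw [prefHeight_cons_succ, prefHeight_cons_succ] at this
    linarith
  · intro h j
    cases j with
    | zero => simp [prefHeight_zero]
    | succ j =>
      rw [prefHeight_cons_succ, prefHeight_cons_succ]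
      linarith [h j]

theorem dyckLE_append_left (A : List Bool) {v w : List Bool} (h : dyckLE v w) :
    dyckLE (A ++ v) (A ++ w) := by
  induction A with
  | nil => exact h
  | cons a A ih => exact (dyckLE_cons_iff a _ _).2 ih

theorem dyckLE_antisymm {P Q : List Bool} (h : dyckLE P Q) (h' : dyckLE Q P) : P = Q := by
  induction P generalizing Q with
  | nil =>
    cases Q with
    | nil => rfl
    | cons b Q =>
      have h1 := h 1
      have h2 := h' 1
      cases b <;> simp [prefHeight_eq] at h1 h2
  | cons a P ih =>
    cases Q with
    | nil =>
      have h1 := h 1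
      have h2 := h' 1
      cases a <;> simp [prefHeight_eq] at h1 h2
    | cons b Q =>
      have hab : a = b := by
        have h1 := h 1
        have h2 := h' 1
        cases a <;> cases b <;> simp [prefHeight_eq] at h1 h2 ⊢
      subst hab
      rw [dyckLE_cons_iff] at h h'
      rw [ih h h']

/-- Moving a down step to the right raises a word in the Dyck order. -/
theorem dyckLE_move_down (A C B : List Bool) :
    dyckLE (A ++ false :: (C ++ B)) (A ++ (C ++ false :: B)) := by
  apply dyckLE_append_left
  induction C with
  | nil => exact dyckLE_refl _
  | cons a C ih =>
    refine dyckLE.trans ?_ ((dyckLE_cons_iff a _ _).2 ih)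
    cases a with
    | false => exact dyckLE_refl _
    | true =>
      intro j
      match j with
      | 0 => simp [prefHeight_zero]
      | 1 => simp [prefHeight_eq]
      | j + 2 => simp [prefHeight_cons_succ]

/-- Two words which first differ by a down step and an up step determine their common prefix. -/
theorem eq_of_first_difference {A A' X X' Y Y' : List Bool}
    (hP : A ++ false :: X = A' ++ false :: X') (hQ : A ++ true :: Y = A' ++ true :: Y') :
    A = A' ∧ X = X' ∧ Y = Y' := by
  induction A generalizing A' with
  | nil =>
    cases A' with
    | nil => simpa using And.intro hP hQ
    | cons a A' => simp at hP hQ; have := hP.1.symm.trans hQ.1; simp at this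
  | cons a A ih =>
    cases A' with
    | nil => simp at hP hQ; have := hP.1.symm.trans hQ.1; simp at this
    | cons b A' =>
      simp only [List.cons_append, List.cons.injEq] at hP hQ
      obtain ⟨h1, h2, h3⟩ := ih hP.2 hQ.2
      exact ⟨by rw [hP.1, h1], h2, h3⟩

/-! ### Rotations along a family of excursions -/

/-- `Q` is obtained from `P` by exchanging a down step with a following factor in `E`. -/
def Rotation (E : List Bool → Prop) (P Q : List Bool) : Prop :=
  ∃ A C B, E C ∧ P = A ++ false :: (C ++ B) ∧ Q = A ++ (C ++ false :: B)

/-- The order generated by rotations along `E`. -/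
def rotLE (E : List Bool → Prop) : List Bool → List Bool → Prop :=
  Relation.ReflTransGen (Rotation E)

theorem Rotation.dyckLE {E : List Bool → Prop} {P Q : List Bool} (h : Rotation E P Q) :
    dyckLE P Q := by
  obtain ⟨A, C, B, -, rfl, rfl⟩ := h
  exact dyckLE_move_down A C B

theorem rotLE.dyckLE {E : List Bool → Prop} {P Q : List Bool} (h : rotLE E P Q) :
    dyckLE P Q := by
  induction h with
  | refl => exact dyckLE_refl _
  | tail _ h ih => exact ih.trans h.dyckLE

theorem rotLE_antisymm {E : List Bool → Prop} {P Q : List Bool}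
    (h : rotLE E P Q) (h' : rotLE E Q P) : P = Q :=
  dyckLE_antisymm h.dyckLE h'.dyckLE

theorem Rotation.perm {E : List Bool → Prop} {P Q : List Bool} (h : Rotation E P Q) :
    P.Perm Q := by
  obtain ⟨A, C, B, -, rfl, rfl⟩ := h
  exact List.Perm.append_left A List.perm_middle.symm

theorem isDyckWord_iff {n : ℕ} {w : List Bool} :
    IsDyckWord n w ↔ w.count true = n ∧ w.count false = n ∧ ∀ j, 0 ≤ prefHeight w j := by
  refine and_congr_right fun _ => and_congr_right fun _ => ⟨fun h j => ?_, fun h p hp => ?_⟩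
  · have := h _ (List.take_prefix j w)
    simp only [prefHeight]
    omega
  · obtain ⟨t, rfl⟩ := hp
    have := h p.length
    rw [prefHeight_length_append] at this
    simp only [wordHeight] at this
    omega

theorem Rotation.mem_dyckSet {E : List Bool → Prop} {n : ℕ} {P Q : List Bool}
    (h : Rotation E P Q) (hP : P ∈ DyckSet n) : Q ∈ DyckSet n := by
  obtain ⟨h1, h2, h3⟩ := isDyckWord_iff.1 hP
  refine isDyckWord_iff.2 ⟨?_, ?_, fun j => (h3 j).trans (h.dyckLE j)⟩
  · rw [← h.perm.count_eq, h1]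
  · rw [← h.perm.count_eq, h2]

theorem rotLE.mem_dyckSet {E : List Bool → Prop} {n : ℕ} {P Q : List Bool}
    (h : rotLE E P Q) (hP : P ∈ DyckSet n) : Q ∈ DyckSet n := by
  induction h with
  | refl => exact hP
  | tail _ h ih => exact h.mem_dyckSet ih

/-- The closure properties shared by the up step alone and by the excursions of up steps
that govern the linear intervals of the order `rotLE E`. -/
structure IsExcursionFamily (E : List Bool → Prop) : Prop where
  head : ∀ {C}, E C → ∃ C', C = true :: C'
  code : ∀ {C C' B B'}, E C → E C' → C ++ B = C' ++ B' → C = C'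
  /-- An excursion starting before a rotated pair `C d` either ends before it or contains it. -/
  contains : ∀ {A C C' B B'}, E C → E C' → A ≠ [] → C' ++ B' = A ++ (C ++ false :: B) →
    (∃ T, A = C' ++ T) ∨ ∃ X, C' = A ++ (C ++ false :: X) ∧
      (E (A ++ false :: (C ++ X)) ∨ X = [] ∧ E (A ++ [false]))
  /-- A valley inside an excursion can be rotated inside this excursion. -/
  inside : ∀ {Y Z C' B B'}, E (Y ++ false :: Z) → E C' → Z ≠ [] → Z ++ B = C' ++ B' →
    ∃ Z', Z = C' ++ Z' ∧ E (Y ++ (C' ++ false :: Z'))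
  absorb : ∀ {F C}, E (F ++ [false]) → E C → E (F ++ (C ++ [false]))
  /-- Rotating inside a product of excursions leaves the interval in which these excursions are
  exchanged with down steps. -/
  not_le : ∀ {Cs : List (List Bool)} {A X Z C' B B' : List Bool} {k : ℕ}, (∀ C ∈ Cs, E C) →
    E C' → Cs.flatten = X ++ false :: Z → Z ≠ [] → Z ++ B = C' ++ B' →
    ¬ rotLE E (A ++ (List.replicate k false ++ (X ++ (C' ++ false :: B'))))
      (A ++ (Cs.flatten ++ (List.replicate k false ++ B)))

section ExcursionFamily

variable {E : List Bool → Prop} {n : ℕ}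

/-- In the interval exchanging `d^k` with a product of excursions, only the last of these
down steps can be rotated first. -/
theorem IsExcursionFamily.first_rotation (hE : IsExcursionFamily E) {Cs : List (List Bool)}
    (hCs : ∀ C ∈ Cs, E C) {k : ℕ} {A B A₁ C₁ B₁ : List Bool} (hC₁ : E C₁)
    (hP : A ++ (List.replicate k false ++ (Cs.flatten ++ B)) = A₁ ++ false :: (C₁ ++ B₁))
    (hle : rotLE E (A₁ ++ (C₁ ++ false :: B₁))
      (A ++ (Cs.flatten ++ (List.replicate k false ++ B)))) :
    ∃ k', k = k' + 1 ∧ A₁ = A ++ List.replicate k' false ∧ C₁ ++ B₁ = Cs.flatten ++ B := by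
  obtain ⟨C₀, hC₀⟩ := hE.head hC₁
  have hh : wordHeight A₁ + 1 ≤
      prefHeight (A ++ (Cs.flatten ++ (List.replicate k false ++ B))) (A₁.length + 1) := by
    have := hle.dyckLE (A₁.length + 1)
    rwa [prefHeight_add_length, hC₀, List.cons_append, prefHeight_cons_succ, prefHeight_zero,
      wordHeight_cons_true, wordHeight_nil, zero_add, add_zero] at this
  have hend : ∀ T, A₁ ++ [false] ≠ A ++ (List.replicate k false ++ (Cs.flatten ++ T)) := by
    intro T hT
    have hB : B = T ++ (C₁ ++ B₁) := by
      have : A₁ ++ [false] ++ (C₁ ++ B₁) =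
          A ++ (List.replicate k false ++ (Cs.flatten ++ B)) := by simp [hP]
      rw [hT] at this
      simpa using this.symm
    have hl : A₁.length + 1 = (A ++ (Cs.flatten ++ (List.replicate k false ++ T))).length := by
      have := congrArg List.length hT
      simp at this ⊢
      omega
    have hw := congrArg wordHeight hT
    rw [hl, hB, show A ++ (Cs.flatten ++ (List.replicate k false ++ (T ++ (C₁ ++ B₁)))) =
      (A ++ (Cs.flatten ++ (List.replicate k false ++ T))) ++ (C₁ ++ B₁) by simp,
      prefHeight_length_append] at hh
    simp at hh hw
    omega
  obtain ⟨T, rfl⟩ : ∃ T, A₁ = A ++ T := by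
    rcases List.append_eq_append_iff.1 hP with ⟨T, hT, -⟩ | ⟨T, hT, hT'⟩
    · exact ⟨T, hT⟩
    · cases T with
      | nil => exact ⟨[], by simpa using hT.symm⟩
      | cons a T =>
        exfalso
        simp only [List.cons_append, List.cons.injEq] at hT'
        rw [← hT'.1] at hT
        rw [hT, show A₁.length + 1 = (A₁ ++ [false]).length by simp,
          show A₁ ++ false :: T = (A₁ ++ [false]) ++ T by simp, List.append_assoc,
          prefHeight_length_append] at hh
        simp at hh
  rw [List.append_assoc, List.append_cancel_left_eq] at hP
  have hlate : ∀ X, T = List.replicate k false ++ X → False := by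
    rintro X rfl
    rw [List.append_assoc, List.append_cancel_left_eq] at hP
    rcases List.append_eq_append_iff.1 hP with ⟨Y, hY, -⟩ | ⟨Y, hY, hY'⟩
    · exact hend (Y ++ [false]) (by simp [hY])
    · cases Y with
      | nil => exact hend [false] (by simp at hY; simp [hY])
      | cons a Z =>
        simp only [List.cons_append, List.cons.injEq] at hY'
        obtain ⟨rfl, hY'⟩ := hY'
        by_cases hZ : Z = []
        · subst hZ
          exact hend [] (by simp [hY])
        · exact hE.not_le hCs hC₁ hY hZ hY'.symm (by simpa using hle)
  rcases List.append_eq_append_iff.1 hP with ⟨X, hX, -⟩ | ⟨Y, hY, hY'⟩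
  · exact (hlate X hX).elim
  · cases Y with
    | nil => exact (hlate [] (by simpa using hY.symm)).elim
    | cons a Y =>
      simp only [List.cons_append, List.cons.injEq] at hY'
      obtain ⟨rfl, hY'⟩ := hY'
      obtain ⟨hk, hT, hY⟩ := List.append_eq_replicate_iff.1 hY.symm
      simp only [List.length_cons, List.replicate_succ, List.cons.injEq, true_and] at hk hY
      cases Y with
      | nil => exact ⟨T.length, by simp at hk; omega, by rw [← hT], by simpa using hY'⟩
      | cons a Y =>
        simp only [List.length_cons, List.replicate_succ, List.cons.injEq] at hY
        simp [hC₀, hY.1] at hY'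

/-- The pair `(A d^k C B, A C d^k B)`, with `C` in `E`. -/
def IsLeftPair (E : List Bool → Prop) (k : ℕ) (P Q : List Bool) : Prop :=
  ∃ A C B, E C ∧ P = A ++ (List.replicate k false ++ (C ++ B)) ∧
    Q = A ++ (C ++ (List.replicate k false ++ B))

/-- The pair `(A d C₁ ⋯ C_k B, A C₁ ⋯ C_k d B)`, with the `Cᵢ` in `E`. -/
def IsRightPair (E : List Bool → Prop) (k : ℕ) (P Q : List Bool) : Prop :=
  ∃ (A : List Bool) (Cs : List (List Bool)) (B : List Bool), Cs.length = k ∧ (∀ C ∈ Cs, E C) ∧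
    P = A ++ false :: (Cs.flatten ++ B) ∧ Q = A ++ (Cs.flatten ++ false :: B)

/-- There is exactly one path of rotations from `P` to `Q`, and it has length `k`. -/
inductive UniquePath (E : List Bool → Prop) : ℕ → List Bool → List Bool → Prop
  | refl (P : List Bool) : UniquePath E 0 P P
  | step {k : ℕ} {P P₁ Q : List Bool} (h : Rotation E P P₁) (hQ : UniquePath E k P₁ Q)
    (huniq : ∀ R, Rotation E P R → rotLE E R Q → R = P₁) : UniquePath E (k + 1) P Q

theorem IsExcursionFamily.uniquePath_of_isLeftPair (hE : IsExcursionFamily E) {k : ℕ}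
    {P Q : List Bool} (h : IsLeftPair E k P Q) : UniquePath E k P Q := by
  induction k generalizing P Q with
  | zero =>
    obtain ⟨A, C, B, -, rfl, rfl⟩ := h
    exact UniquePath.refl _
  | succ k ih =>
    obtain ⟨A, C, B, hC, rfl, rfl⟩ := h
    refine UniquePath.step (P₁ := A ++ (List.replicate k false ++ (C ++ false :: B)))
      ⟨A ++ List.replicate k false, C, B, hC, by simp [List.replicate_succ'], by simp⟩
      (ih ⟨A, C, false :: B, hC, rfl, by simp [List.replicate_succ']⟩) ?_
    rintro R ⟨A₁, C₁, B₁, hC₁, hP, rfl⟩ hR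
    have hflat : [C].flatten = C := by simp
    obtain ⟨k', hk, rfl, heq⟩ := hE.first_rotation (Cs := [C]) (by simpa using hC) hC₁
      (by rw [hflat]; exact hP) (by rw [hflat]; exact hR)
    obtain rfl : k = k' := by omega
    rw [hflat] at heq
    obtain rfl := hE.code hC₁ hC heq
    rw [List.append_cancel_left_eq] at heq
    simp [heq]

theorem IsExcursionFamily.uniquePath_of_isRightPair (hE : IsExcursionFamily E) {k : ℕ}
    {P Q : List Bool} (h : IsRightPair E k P Q) : UniquePath E k P Q := by
  induction k generalizing P Q with
  | zero =>
    obtain ⟨A, Cs, B, hk, -, rfl, rfl⟩ := h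
    obtain rfl := List.length_eq_zero_iff.1 hk
    exact UniquePath.refl _
  | succ k ih =>
    obtain ⟨A, Cs, B, hk, hCs, rfl, rfl⟩ := h
    obtain ⟨C, Cs, rfl⟩ := List.exists_cons_of_length_eq_add_one hk
    have hC : E C := hCs C (by simp)
    refine UniquePath.step (P₁ := A ++ (C ++ false :: (Cs.flatten ++ B)))
      ⟨A, C, Cs.flatten ++ B, hC, by simp, by simp⟩
      (ih ⟨A ++ C, Cs, B, by simpa using hk, fun D hD => hCs D (by simp [hD]), by simp,
        by simp⟩) ?_
    rintro R ⟨A₁, C₁, B₁, hC₁, hP, rfl⟩ hR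
    obtain ⟨k', hk, rfl, heq⟩ := hE.first_rotation (k := 1) hCs hC₁ hP hR
    obtain rfl : k' = 0 := by omega
    rw [List.flatten_cons, List.append_assoc] at heq
    obtain rfl := hE.code hC₁ hC heq
    rw [List.append_cancel_left_eq] at heq
    simp [heq]

theorem UniquePath.rotLE {k : ℕ} {P Q : List Bool} (h : UniquePath E k P Q) : rotLE E P Q := by
  induction h with
  | refl P => exact Relation.ReflTransGen.refl
  | step h _ _ ih => exact Relation.ReflTransGen.head h ih

/-- An element of an interval with a unique path is its bottom or lies above the next step. -/
theorem eq_or_rotLE_of_unique {P P₁ Q R : List Bool}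
    (huniq : ∀ R, Rotation E P R → rotLE E R Q → R = P₁) (hPR : rotLE E P R)
    (hRQ : rotLE E R Q) : R = P ∨ rotLE E P₁ R := by
  rcases Relation.ReflTransGen.cases_head hPR with rfl | ⟨R₁, h, h'⟩
  · exact Or.inl rfl
  · rw [← huniq R₁ h (Relation.ReflTransGen.trans h' hRQ)]
    exact Or.inr h'

theorem UniquePath.total {k : ℕ} {P Q R R' : List Bool} (h : UniquePath E k P Q)
    (hPR : _root_.rotLE E P R) (hRQ : _root_.rotLE E R Q) (hPR' : _root_.rotLE E P R')
    (hRQ' : _root_.rotLE E R' Q) : _root_.rotLE E R R' ∨ _root_.rotLE E R' R := by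
  induction h with
  | refl P =>
    rw [rotLE_antisymm hRQ hPR, rotLE_antisymm hRQ' hPR']
    exact Or.inl Relation.ReflTransGen.refl
  | step _ _ huniq ih =>
    rcases eq_or_rotLE_of_unique huniq hPR hRQ with rfl | h1
    · exact Or.inl hPR'
    rcases eq_or_rotLE_of_unique huniq hPR' hRQ' with rfl | h2
    · exact Or.inr hPR
    exact ih h1 hRQ h2 hRQ'

theorem HasChainIn.rotLE {S : Set (List Bool)} {m : ℕ} {P Q : List Bool}
    (h : HasChainIn S (rotLE E) P Q m) : rotLE E P Q := by
  obtain ⟨c, rfl, rfl, -, hc⟩ := h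
  induction m with
  | zero => exact Relation.ReflTransGen.refl
  | succ m ih =>
    exact Relation.ReflTransGen.trans (ih fun i hi => hc i (by omega)) (hc m (by omega)).1

theorem HasChainIn.tail {S : Set (List Bool)} {le : List Bool → List Bool → Prop} {m : ℕ}
    {P Q : List Bool} (h : HasChainIn S le P Q (m + 1)) :
    ∃ R, ltOf le P R ∧ HasChainIn S le R Q m := by
  obtain ⟨c, rfl, rfl, hS, hc⟩ := h
  exact ⟨c 1, hc 0 (by omega), fun i => c (i + 1), rfl, rfl, fun i hi => hS _ (by omega),
    fun i hi => hc _ (by omega)⟩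

theorem HasChainIn.cons {S : Set (List Bool)} {le : List Bool → List Bool → Prop} {m : ℕ}
    {P Q R : List Bool} (hP : P ∈ S) (hPR : ltOf le P R) (h : HasChainIn S le R Q m) :
    HasChainIn S le P Q (m + 1) := by
  obtain ⟨c, rfl, rfl, hS, hc⟩ := h
  refine ⟨fun i => Nat.casesOn i P c, rfl, rfl, ?_, ?_⟩
  · rintro (_ | i) hi
    · exact hP
    · exact hS i (by omega)
  · rintro (_ | i) hi
    · exact hPR
    · exact hc i (by omega)

theorem UniquePath.chain_le {S : Set (List Bool)} {k : ℕ} {P Q : List Bool}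
    (h : UniquePath E k P Q) : ∀ {R : List Bool} {m : ℕ}, _root_.rotLE E P R →
      HasChainIn S (_root_.rotLE E) R Q m → m ≤ k := by
  induction h with
  | refl P =>
    rintro R (_ | m) hPR hR
    · exact le_rfl
    · obtain ⟨R', hlt, hR'⟩ := hR.tail
      exact (hlt.2 (Relation.ReflTransGen.trans hR'.rotLE hPR)).elim
  | step _ _ huniq ih =>
    rintro R (_ | m) hPR hR
    · omega
    rcases eq_or_rotLE_of_unique huniq hPR hR.rotLE with rfl | h1
    · obtain ⟨R', hlt, hR'⟩ := hR.tail
      rcases eq_or_rotLE_of_unique huniq hlt.1 hR'.rotLE with rfl | h2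
      · exact (hlt.2 hlt.1).elim
      · have := ih h2 hR'
        omega
    · have := ih h1 hR
      omega

theorem IsExcursionFamily.rotation_ne (hE : IsExcursionFamily E) {P Q : List Bool}
    (h : Rotation E P Q) : P ≠ Q := by
  obtain ⟨A, C, B, hC, rfl, rfl⟩ := h
  obtain ⟨C', rfl⟩ := hE.head hC
  simp

theorem IsExcursionFamily.ltOf_of_rotation (hE : IsExcursionFamily E) {P Q : List Bool}
    (h : Rotation E P Q) : ltOf (rotLE E) P Q :=
  ⟨Relation.ReflTransGen.single h, fun h' =>
    hE.rotation_ne h (rotLE_antisymm (Relation.ReflTransGen.single h) h')⟩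

theorem IsExcursionFamily.hasChainIn_of_uniquePath (hE : IsExcursionFamily E) {k : ℕ}
    {P Q : List Bool} (h : UniquePath E k P Q) (hP : P ∈ DyckSet n) :
    HasChainIn (DyckSet n) (rotLE E) P Q k := by
  induction h with
  | refl P => exact ⟨fun _ => P, rfl, rfl, fun _ _ => hP, fun i hi => by omega⟩
  | step h _ _ ih => exact (ih (h.mem_dyckSet hP)).cons hP (hE.ltOf_of_rotation h)

theorem IsExcursionFamily.linearInterval_of_uniquePath (hE : IsExcursionFamily E) {k : ℕ}
    {P Q : List Bool} (h : UniquePath E k P Q) (hP : P ∈ DyckSet n) :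
    LinearInterval (DyckSet n) (rotLE E) P Q ∧ IntervalHeight (DyckSet n) (rotLE E) P Q k :=
  ⟨⟨hP, h.rotLE.mem_dyckSet hP, h.rotLE, fun _ _ _ _ h1 h2 h3 h4 => h.total h1 h2 h3 h4⟩,
    hE.hasChainIn_of_uniquePath h hP, fun _ hm => h.chain_le Relation.ReflTransGen.refl hm⟩

/-- The bottom of a linear interval has at most one rotation in this interval. -/
theorem IsExcursionFamily.rotation_unique (hE : IsExcursionFamily E) {P Q R R' : List Bool}
    (h : LinearInterval (DyckSet n) (rotLE E) P Q) (hR : Rotation E P R) (hRQ : rotLE E R Q)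
    (hR' : Rotation E P R') (hRQ' : rotLE E R' Q) : R = R' := by
  have cover : ∀ {R R'}, Rotation E P R → Rotation E P R' → rotLE E R R' → R = R' := by
    rintro R R' hR ⟨A, C, B, hC, rfl, rfl⟩ hle
    have hU := hE.uniquePath_of_isLeftPair (k := 1) ⟨A, C, B, hC, rfl, rfl⟩
    cases hU with
    | step h hQ huniq =>
      cases hQ
      exact huniq R hR hle
  rcases h.2.2.2 R R' (hR.mem_dyckSet h.1) (hR'.mem_dyckSet h.1) (.single hR) hRQ (.single hR')
    hRQ' with hle | hle
  · exact cover hR hR' hle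
  · exact (cover hR' hR hle).symm

theorem LinearInterval.mono {P Q P' Q' : List Bool}
    (h : LinearInterval (DyckSet n) (rotLE E) P Q) (hP : rotLE E P P') (hPQ : rotLE E P' Q')
    (hQ : rotLE E Q' Q) : LinearInterval (DyckSet n) (rotLE E) P' Q' :=
  ⟨hP.mem_dyckSet h.1, hPQ.mem_dyckSet (hP.mem_dyckSet h.1), hPQ,
    fun R R' hR hR' h1 h2 h3 h4 => h.2.2.2 R R' hR hR' (.trans hP h1) (.trans h2 hQ)
      (.trans hP h3) (.trans h4 hQ)⟩

/-- Two consecutive rotations spanning a linear interval move either two consecutive down steps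
across the same excursion, or the same down step across two consecutive excursions. -/
theorem IsExcursionFamily.two_rotations (hE : IsExcursionFamily E)
    {A C B A' C' B' : List Bool} (hC : E C) (hC' : E C')
    (h : LinearInterval (DyckSet n) (rotLE E) (A ++ false :: (C ++ B))
      (A' ++ (C' ++ false :: B')))
    (heq : A ++ (C ++ false :: B) = A' ++ false :: (C' ++ B')) :
    (A = A' ++ [false] ∧ C = C' ∧ B' = false :: B) ∨ (A' = A ++ C ∧ B = C' ++ B') := by
  obtain ⟨D, hD⟩ := hE.head hC
  obtain ⟨D', hD'⟩ := hE.head hC'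
  have huniq : ∀ R, Rotation E (A ++ false :: (C ++ B)) R →
      rotLE E R (A' ++ (C' ++ false :: B')) → R = A ++ (C ++ false :: B) := fun R hR hRQ =>
    hE.rotation_unique h hR hRQ ⟨A, C, B, hC, rfl, rfl⟩
      (.single ⟨A', C', B', hC', heq, rfl⟩)
  rcases List.append_eq_append_iff.1 heq with ⟨T, rfl, hT⟩ | ⟨T, rfl, hT⟩
  · rcases List.append_eq_append_iff.1 hT with ⟨U, rfl, hU⟩ | ⟨U, rfl, hU⟩
    · cases U with
      | nil => exact Or.inr ⟨by simp, by simpa using hU⟩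
      | cons a U =>
        simp only [List.cons_append, List.cons.injEq] at hU
        obtain ⟨rfl, rfl⟩ := hU
        have := huniq (A ++ false :: (C ++ (U ++ (C' ++ false :: B'))))
          ⟨A ++ false :: (C ++ U), C', B', hC', by simp, by simp⟩
          (.single ⟨A, C, U ++ (C' ++ false :: B'), hC, by simp, by simp⟩)
        simp [hD] at this
    · cases U with
      | nil => exact Or.inr ⟨by simp, by simpa using hU.symm⟩
      | cons a Z =>
        simp only [List.cons_append, List.cons.injEq] at hU
        obtain ⟨rfl, hU⟩ := hU
        have hZ : Z ≠ [] := by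
          rintro rfl
          simp [hD'] at hU
        obtain ⟨Z', rfl, hZ'⟩ := hE.inside hC hC' hZ hU.symm
        rw [List.append_assoc, List.append_cancel_left_eq] at hU
        subst hU
        have := huniq (A ++ false :: (T ++ (C' ++ false :: (Z' ++ B))))
          ⟨A ++ false :: T, C', Z' ++ B, hC', by simp, by simp⟩
          (.single ⟨A, T ++ (C' ++ false :: Z'), B, hZ', by simp, by simp⟩)
        rw [hD] at this
        simp at this
  · cases T with
    | nil => simp [hD] at hT
    | cons a T =>
      simp only [List.cons_append, List.cons.injEq] at hT
      obtain ⟨rfl, hT⟩ := hT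
      by_cases hT0 : T = []
      · subst hT0
        obtain rfl := hE.code hC' hC hT
        exact Or.inl ⟨rfl, rfl, by simpa using hT⟩
      obtain ⟨T₀, hT₀⟩ : ∃ T₀, T = true :: T₀ := by
        cases T with
        | nil => exact (hT0 rfl).elim
        | cons a T =>
          simp only [hD', List.cons_append, List.cons.injEq] at hT
          exact ⟨T, by rw [← hT.1]⟩
      rcases hE.contains hC hC' hT0 hT with ⟨U, rfl⟩ | ⟨X, rfl, hX⟩
      · have hB' : B' = U ++ (C ++ false :: B) := by simpa using hT
        subst hB'
        have := huniq (A' ++ (C' ++ false :: (U ++ false :: (C ++ B))))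
          ⟨A', C', U ++ false :: (C ++ B), hC', by simp, by simp⟩
          (.single ⟨A' ++ (C' ++ false :: U), C, B, hC, by simp, by simp⟩)
        simp [hD'] at this
      · have hB : B = X ++ B' := by simpa using hT.symm
        subst hB
        rcases hX with hX | ⟨rfl, hX⟩
        · have := huniq (A' ++ (T ++ false :: (C ++ (X ++ false :: B'))))
            ⟨A', T ++ false :: (C ++ X), B', hX, by simp, by simp⟩
            (.single ⟨A' ++ T, C, X ++ false :: B', hC, by simp, by simp⟩)
          simp [hT₀] at this
        · have := huniq (A' ++ (T ++ false :: false :: (C ++ B')))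
            ⟨A', T ++ [false], C ++ B', hX, by simp, by simp⟩
            (.head ⟨A' ++ (T ++ [false]), C, B', hC, by simp, rfl⟩
              (.single ⟨A' ++ T, C, false :: B', hC, by simp, by simp⟩))
          simp [hT₀] at this

theorem IsExcursionFamily.pair_of_linearInterval (hE : IsExcursionFamily E) {P Q : List Bool}
    (h : LinearInterval (DyckSet n) (rotLE E) P Q) :
    P = Q ∨ ∃ k, IsLeftPair E (k + 1) P Q ∨ IsRightPair E (k + 1) P Q := by
  obtain hle : rotLE E P Q := h.2.2.1
  revert h
  induction hle using Relation.ReflTransGen.head_induction_on with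
  | refl => exact fun _ => Or.inl rfl
  | head hrot hle ih =>
    intro h
    obtain ⟨A, C, B, hC, rfl, rfl⟩ := hrot
    have hrot : Rotation E (A ++ false :: (C ++ B)) (A ++ (C ++ false :: B)) :=
      ⟨A, C, B, hC, rfl, rfl⟩
    right
    rcases ih (h.mono (.single hrot) hle .refl) with rfl | ⟨k, hk | hk⟩
    · exact ⟨0, Or.inl ⟨A, C, B, hC, rfl, rfl⟩⟩
    · obtain ⟨A', C', B', hC', heq, rfl⟩ := hk
      have hrest := (hE.uniquePath_of_isLeftPair (k := k)
        ⟨A', C', false :: B', hC', rfl, rfl⟩).rotLE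
      have heq' : A ++ (C ++ false :: B) =
          (A' ++ List.replicate k false) ++ false :: (C' ++ B') := by
        simp [heq, List.replicate_succ']
      have hQ : A' ++ (C' ++ (List.replicate k false ++ false :: B')) =
          A' ++ (C' ++ (List.replicate (k + 1) false ++ B')) := by
        simp [List.replicate_succ']
      rw [hQ] at hrest
      rcases hE.two_rotations hC hC' (h.mono .refl (.head hrot (.single
        ⟨A' ++ List.replicate k false, C', B', hC', heq', rfl⟩)) (by simpa using hrest)) heq'
        with ⟨rfl, rfl, rfl⟩ | ⟨hA', rfl⟩
      · refine ⟨k + 1, Or.inl ⟨A', C, B, hC, ?_, ?_⟩⟩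
        · simp [List.replicate_succ']
        · simp [List.replicate_succ']
      · cases k with
        | zero =>
          simp at hA'
          refine ⟨1, Or.inr ⟨A, [C, C'], B', rfl, by simp [hC, hC'], by simp, by simp [hA']⟩⟩
        | succ k =>
          exfalso
          obtain ⟨F, rfl⟩ : ∃ F, C = F ++ [false] := by
            rcases List.eq_nil_or_concat C with rfl | ⟨F, b, rfl⟩
            · simpa using hE.head hC
            · rw [List.replicate_succ', ← List.append_assoc, List.concat_eq_append,
                ← List.append_assoc] at hA'
              have := (List.append_inj' hA' rfl).2
              simp only [List.cons.injEq, and_true] at this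
              exact ⟨F, by rw [this, List.concat_eq_append]⟩
          have hAF : A' ++ List.replicate k false = A ++ F := by
            rw [List.replicate_succ', ← List.append_assoc, ← List.append_assoc] at hA'
            exact (List.append_inj' hA' rfl).1
          have hrest' := (hE.uniquePath_of_isLeftPair (k := k)
            ⟨A', C', false :: false :: B', hC', rfl, rfl⟩).rotLE
          have := hE.rotation_unique h hrot hle
            (R' := A ++ false :: (F ++ (C' ++ false :: B')))
            ⟨A ++ false :: F, C', B', hC', by simp, by simp⟩
            (.head ⟨A, F ++ (C' ++ [false]), B', hE.absorb hC hC', by simp, rfl⟩ (by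
              have e1 : A' ++ (List.replicate k false ++ (C' ++ false :: false :: B')) =
                  A ++ (F ++ (C' ++ [false]) ++ false :: B') := by
                rw [← List.append_assoc, hAF]; simp
              have e2 : A' ++ (C' ++ (List.replicate k false ++ false :: false :: B')) =
                  A' ++ (C' ++ (List.replicate (k + 1 + 1) false ++ B')) := by
                simp [List.replicate_succ']
              rwa [e1, e2] at hrest'))
          obtain ⟨D, hD⟩ := hE.head hC
          rw [hD] at this
          simp at this
    · obtain ⟨A', Cs, B', hlen, hCs, heq, rfl⟩ := hk
      obtain ⟨C', Cs, rfl⟩ := List.exists_cons_of_length_eq_add_one hlen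
      have hC' : E C' := hCs C' (by simp)
      have hrest := (hE.uniquePath_of_isRightPair (k := k)
        ⟨A' ++ C', Cs, B', by simpa using hlen, fun D hD => hCs D (by simp [hD]), rfl,
          rfl⟩).rotLE
      have heq' : A ++ (C ++ false :: B) = A' ++ false :: (C' ++ (Cs.flatten ++ B')) := by
        simp [heq]
      rcases hE.two_rotations hC hC' (h.mono .refl (.head hrot (.single
        ⟨A', C', Cs.flatten ++ B', hC', heq', rfl⟩)) (by simpa using hrest)) heq'
        with ⟨rfl, rfl, hB⟩ | ⟨rfl, rfl⟩
      · cases Cs with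
        | nil =>
          simp only [List.length_cons, List.length_nil, Nat.add_right_cancel_iff] at hlen
          subst hlen
          simp only [List.flatten_nil, List.nil_append] at hB
          subst hB
          exact ⟨1, Or.inl ⟨A', C, B, hC, by simp [List.replicate_succ],
            by simp [List.replicate_succ]⟩⟩
        | cons C'' Cs =>
          obtain ⟨D, rfl⟩ := hE.head (hCs C'' (by simp))
          simp at hB
      · refine ⟨k + 1, Or.inr ⟨A, C :: C' :: Cs, B', by simpa using hlen, ?_, by simp,
          by simp⟩⟩
        rintro D hD
        rcases List.mem_cons.1 hD with rfl | hD
        · exact hC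
        · exact hCs D hD

/-- Linear intervals of height `k` in the order generated by the rotations along `E`. -/
theorem IsExcursionFamily.linearInterval_iff (hE : IsExcursionFamily E) {k : ℕ}
    {P Q : List Bool} :
    (LinearInterval (DyckSet n) (rotLE E) P Q ∧ IntervalHeight (DyckSet n) (rotLE E) P Q k) ↔
      P ∈ DyckSet n ∧ ((k = 0 ∧ P = Q) ∨ (0 < k ∧ (IsLeftPair E k P Q ∨ IsRightPair E k P Q))) := by
  constructor
  · rintro ⟨h, hk⟩
    refine ⟨h.1, ?_⟩
    have key : ∀ m, UniquePath E m P Q → k = m := fun m hm =>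
      have hm' := (hE.linearInterval_of_uniquePath hm h.1).2
      le_antisymm (hm'.2 k hk.1) (hk.2 m hm'.1)
    rcases hE.pair_of_linearInterval h with rfl | ⟨m, hm⟩
    · exact Or.inl ⟨key 0 (.refl P), rfl⟩
    · obtain rfl := key (m + 1)
        (hm.elim hE.uniquePath_of_isLeftPair hE.uniquePath_of_isRightPair)
      exact Or.inr ⟨m.succ_pos, hm⟩
  · rintro ⟨hP, ⟨rfl, rfl⟩ | ⟨-, h⟩⟩
    · exact hE.linearInterval_of_uniquePath (.refl P) hP
    · exact hE.linearInterval_of_uniquePath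
        (h.elim hE.uniquePath_of_isLeftPair hE.uniquePath_of_isRightPair) hP

end ExcursionFamily

/-! ### The Dyck lattice -/

/-- The word reduced to one up step. -/
def IsUpStep (C : List Bool) : Prop := C = [true]

theorem isExcursionFamily_isUpStep : IsExcursionFamily IsUpStep where
  head := by rintro _ rfl; exact ⟨[], rfl⟩
  code := by rintro _ _ _ _ rfl rfl _; rfl
  contains := by
    rintro A _ _ B B' rfl rfl hA h
    cases A with
    | nil => exact (hA rfl).elim
    | cons a A =>
      simp only [List.cons_append, List.cons.injEq] at h
      exact Or.inl ⟨A, by simp [h.1]⟩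
  inside := by
    rintro (_ | ⟨a, Y⟩) Z C' B B' h
    all_goals simp [IsUpStep] at h
  absorb := by
    rintro (_ | ⟨a, F⟩) C h
    all_goals simp [IsUpStep] at h
  not_le := by
    intro Cs A X Z C' B B' k hCs _ h
    exfalso
    obtain ⟨C, hC, hmem⟩ := List.mem_flatten.1 (show false ∈ Cs.flatten by simp [h])
    rw [hCs C hC] at hmem
    simp at hmem

theorem rotLE.cons {E : List Bool → Prop} (a : Bool) {P Q : List Bool} (h : rotLE E P Q) :
    rotLE E (a :: P) (a :: Q) := by
  induction h with
  | refl => exact .refl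
  | tail _ h ih =>
    obtain ⟨A, C, B, hC, rfl, rfl⟩ := h
    exact .tail ih ⟨a :: A, C, B, hC, rfl, rfl⟩

theorem exists_replicate_false_append {w : List Bool} (h : 0 < w.count true) :
    ∃ j X, w = List.replicate j false ++ true :: X := by
  induction w with
  | nil => simp at h
  | cons a w ih =>
    cases a with
    | true => exact ⟨0, w, rfl⟩
    | false =>
      obtain ⟨j, X, rfl⟩ := ih (by simpa using h)
      exact ⟨j + 1, X, rfl⟩

theorem rotLE_isUpStep_of_dyckLE {P Q : List Bool} (hlen : P.length = Q.length)
    (hcount : P.count true = Q.count true) (h : dyckLE P Q) : rotLE IsUpStep P Q := by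
  induction Q generalizing P with
  | nil =>
    obtain rfl := List.length_eq_zero_iff.1 hlen
    exact .refl
  | cons b Q ih =>
    obtain ⟨a, P, rfl⟩ := List.exists_cons_of_length_eq_add_one hlen
    simp only [List.length_cons, Nat.add_right_cancel_iff] at hlen
    by_cases hab : a = b
    · subst hab
      rw [dyckLE_cons_iff] at h
      exact (ih hlen (by simpa [List.count_cons] using hcount) h).cons a
    have h1 := h 1
    cases a <;> cases b <;> simp [prefHeight_eq] at hab h1
    obtain ⟨j, X, rfl⟩ := exists_replicate_false_append (w := P) (by simp at hcount; omega)
    have hrot := (isExcursionFamily_isUpStep.uniquePath_of_isLeftPair (k := j + 1)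
      ⟨[], [true], X, rfl, rfl, rfl⟩).rotLE
    simp only [List.nil_append, List.replicate_succ, List.cons_append] at hrot
    refine .trans hrot (rotLE.cons true (ih (by simp at hlen ⊢; omega) ?_ fun i => ?_))
    · simpa [List.count_replicate] using hcount
    rw [← List.cons_append, ← List.replicate_succ]
    rcases le_total i (j + 1) with hi | hi
    · have := neg_length_le_wordHeight (Q.take i)
      have hle := List.length_take_le i Q
      rw [prefHeight_eq, prefHeight_eq, List.take_append_of_le_length (by simpa using hi),
        List.take_replicate, wordHeight_replicate_false, min_eq_left hi]
      omega
    · obtain ⟨t, rfl⟩ := Nat.exists_eq_add_of_le hi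
      have hP := prefHeight_add_length (List.replicate (j + 1) false) X t
      have hP' := prefHeight_add_length (List.replicate (j + 1) false) (true :: X) (t + 1)
      have := h (j + 1 + t + 1)
      rw [← List.cons_append, ← List.replicate_succ] at this
      rw [List.length_replicate] at hP hP'
      rw [← add_assoc, prefHeight_cons_succ] at hP'
      rw [prefHeight_cons_succ] at this
      simp at this hP hP' ⊢
      omega

theorem dyckLE_iff_rotLE {n : ℕ} {P Q : List Bool} (hP : P ∈ DyckSet n) (hQ : Q ∈ DyckSet n) :
    dyckLE P Q ↔ rotLE IsUpStep P Q :=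
  ⟨rotLE_isUpStep_of_dyckLE
    (by rw [← List.count_true_add_count_false P, ← List.count_true_add_count_false Q, hP.1, hQ.1,
      hP.2.1, hQ.2.1]) (hP.1.trans hQ.1.symm), rotLE.dyckLE⟩

theorem linearInterval_congr {S : Set (List Bool)} {le le' : List Bool → List Bool → Prop}
    (h : ∀ P ∈ S, ∀ Q ∈ S, (le P Q ↔ le' P Q)) (P Q : List Bool) :
    LinearInterval S le P Q ↔ LinearInterval S le' P Q := by
  unfold LinearInterval
  refine and_congr_right fun hP => and_congr_right fun hQ => and_congr (h P hP Q hQ) ?_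
  refine forall₄_congr fun R R' hR hR' => ?_
  rw [h P hP R hR, h R hR Q hQ, h P hP R' hR', h R' hR' Q hQ, h R hR R' hR', h R' hR' R hR]

theorem hasChainIn_congr {S : Set (List Bool)} {le le' : List Bool → List Bool → Prop}
    (h : ∀ P ∈ S, ∀ Q ∈ S, (le P Q ↔ le' P Q)) (P Q : List Bool) (k : ℕ) :
    HasChainIn S le P Q k ↔ HasChainIn S le' P Q k := by
  unfold HasChainIn
  refine exists_congr fun c => and_congr_right fun _ => and_congr_right fun _ =>
    and_congr_right fun hS => forall₂_congr fun i hi => ?_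
  have hi' := hS i hi.le
  have hi'' := hS (i + 1) hi
  rw [ltOf, ltOf, h _ hi' _ hi'', h _ hi'' _ hi']

theorem intervalHeight_congr {S : Set (List Bool)} {le le' : List Bool → List Bool → Prop}
    (h : ∀ P ∈ S, ∀ Q ∈ S, (le P Q ↔ le' P Q)) (P Q : List Bool) (k : ℕ) :
    IntervalHeight S le P Q k ↔ IntervalHeight S le' P Q k := by
  simp only [IntervalHeight, hasChainIn_congr h]

/-! ### The Tamari lattice -/

theorem isDyckPath_iff {w : List Bool} :
    IsDyckPath w ↔ wordHeight w = 0 ∧ ∀ X Y, w = X ++ Y → 0 ≤ wordHeight X := by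
  unfold IsDyckPath wordHeight
  refine and_congr (by omega) ⟨fun h X Y hw => ?_, fun h p hp => ?_⟩
  · have := h X ⟨Y, hw.symm⟩
    omega
  · obtain ⟨t, rfl⟩ := hp
    have := h p t rfl
    omega

/-- A nonempty Dyck word without proper nonempty Dyck prefix. -/
def IsPrimeDyck (C : List Bool) : Prop :=
  C ≠ [] ∧ wordHeight C = 0 ∧ ∀ X Y, C = X ++ Y → X ≠ [] → Y ≠ [] → 0 < wordHeight X

theorem IsDyckPath.append {v w : List Bool} (hv : IsDyckPath v) (hw : IsDyckPath w) :
    IsDyckPath (v ++ w) := by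
  rw [isDyckPath_iff] at *
  refine ⟨by simp [hv.1, hw.1], fun X Y h => ?_⟩
  rcases List.append_eq_append_iff.1 h with ⟨T, rfl, hT⟩ | ⟨T, hT, -⟩
  · simpa [hv.1] using hw.2 T Y hT
  · exact hv.2 X T hT

theorem IsPrimeDyck.isDyckPath {C : List Bool} (hC : IsPrimeDyck C) : IsDyckPath C := by
  refine isDyckPath_iff.2 ⟨hC.2.1, fun X Y h => ?_⟩
  by_cases hX : X = []
  · simp [hX]
  by_cases hY : Y = []
  · rw [hY, List.append_nil] at h
    rw [← h, hC.2.1]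
  · exact (hC.2.2 X Y h hX hY).le

theorem IsPrimeDyck.head {C : List Bool} (hC : IsPrimeDyck C) : ∃ C', C = true :: C' := by
  obtain ⟨h0, h1, h2⟩ := hC
  match C with
  | [] => exact (h0 rfl).elim
  | true :: C => exact ⟨C, rfl⟩
  | [false] => simp at h1
  | false :: a :: C => have := h2 [false] (a :: C) rfl (by simp) (by simp); simp at this

theorem isPrimeDyck_iff {C : List Bool} :
    IsPrimeDyck C ↔ ∃ D, IsDyckPath D ∧ C = true :: (D ++ [false]) := by
  constructor
  · intro hC
    obtain ⟨C', rfl⟩ := hC.head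
    obtain ⟨-, h1, h2⟩ := hC
    rcases List.eq_nil_or_concat C' with rfl | ⟨D, b, rfl⟩
    · simp at h1
    rw [List.concat_eq_append] at *
    have hpos := h2 (true :: D) [b] rfl (by simp) (by simp)
    cases b with
    | true => simp at h1 hpos; omega
    | false =>
      refine ⟨D, isDyckPath_iff.2 ⟨by simp at h1; omega, fun X Y h => ?_⟩, rfl⟩
      have := h2 (true :: X) (Y ++ [false]) (by simp [h]) (by simp) (by simp)
      simp at this
      omega
  · rintro ⟨D, hD, rfl⟩
    rw [isDyckPath_iff] at hD
    refine ⟨by simp, by simp [hD.1], fun X Y h hX hY => ?_⟩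
    cases X with
    | nil => exact (hX rfl).elim
    | cons a X =>
      simp only [List.cons_append, List.cons.injEq] at h
      rcases List.eq_nil_or_concat Y with rfl | ⟨Y, b, rfl⟩
      · exact (hY rfl).elim
      rw [List.concat_eq_append, ← List.append_assoc] at h
      have := hD.2 X Y (List.append_inj' h.2 rfl).1
      rw [← h.1, wordHeight_cons_true]
      omega

theorem isDyckPath_nil : IsDyckPath [] := isDyckPath_iff.2 ⟨rfl, fun X Y h => by simp_all⟩

theorem IsDyckPath.node {D D' : List Bool} (hD : IsDyckPath D) (hD' : IsDyckPath D') :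
    IsDyckPath (true :: (D ++ false :: D')) := by
  have := (isPrimeDyck_iff.2 ⟨D, hD, rfl⟩).isDyckPath.append hD'
  simpa using this

theorem isDyckPath_flatten {Cs : List (List Bool)} (h : ∀ C ∈ Cs, IsPrimeDyck C) :
    IsDyckPath Cs.flatten := by
  induction Cs with
  | nil => exact isDyckPath_nil
  | cons C Cs ih =>
    exact (h C (by simp)).isDyckPath.append (ih fun D hD => h D (by simp [hD]))

theorem exists_isDyckPath_append (w : List Bool) (h : wordHeight w < 0) :
    ∃ D B, IsDyckPath D ∧ w = D ++ false :: B := by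
  match w with
  | [] => simp at h
  | false :: B => exact ⟨[], B, isDyckPath_nil, rfl⟩
  | true :: w =>
    rw [wordHeight_cons_true] at h
    obtain ⟨D, B, hD, rfl⟩ := exists_isDyckPath_append w (by omega)
    rw [isDyckPath_iff] at hD
    rw [wordHeight_append, wordHeight_cons_false, hD.1] at h
    obtain ⟨D', B', hD', rfl⟩ := exists_isDyckPath_append B (by omega)
    exact ⟨true :: (D ++ false :: D'), B', (isDyckPath_iff.2 hD).node hD', by simp⟩
termination_by w.length
decreasing_by all_goals subst_vars; simp; try omega

theorem dyck_append_false_inj {D D' B B' : List Bool} (hD : IsDyckPath D) (hD' : IsDyckPath D')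
    (h : D ++ false :: B = D' ++ false :: B') : D = D' ∧ B = B' := by
  have aux : ∀ {D D' B B' : List Bool}, IsDyckPath D → IsDyckPath D' →
      D ++ false :: B = D' ++ false :: B' → ∀ T, D' = D ++ T → T = [] := by
    rintro D D' B B' hD hD' h T rfl
    rw [isDyckPath_iff] at hD hD'
    cases T with
    | nil => rfl
    | cons a T =>
      simp only [List.append_assoc, List.append_cancel_left_eq, List.cons_append,
        List.cons.injEq] at h
      have := hD'.2 (D ++ [a]) T (by simp)
      simp [← h.1, hD.1] at this
  rcases List.append_eq_append_iff.1 h with ⟨T, hT, -⟩ | ⟨T, hT, -⟩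
  · obtain rfl := aux hD hD' h T hT
    simp at hT
    subst hT
    simpa using h
  · obtain rfl := aux hD' hD h.symm T hT
    simp at hT
    subst hT
    simpa using h

/-- The number of up steps of `w` before its height drops to `-h - 1`. -/
def upsBeforeDrop : ℕ → List Bool → ℕ
  | _, [] => 0
  | h, true :: w => upsBeforeDrop (h + 1) w + 1
  | 0, false :: _ => 0
  | h + 1, false :: w => upsBeforeDrop h w

/-- The bracket vector of a word: the numbers of further up steps in the excursions of its
up steps. -/
def bracketVector : List Bool → List ℕ
  | [] => []
  | true :: w => upsBeforeDrop 0 w :: bracketVector w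
  | false :: w => bracketVector w

/-- Induction along the first return decomposition of Dyck words. -/
theorem IsDyckPath.rec_node {motive : ∀ w, IsDyckPath w → Prop} (nil : motive [] isDyckPath_nil)
    (node : ∀ D D' (hD : IsDyckPath D) (hD' : IsDyckPath D'), motive D hD → motive D' hD' →
      motive (true :: (D ++ false :: D')) (hD.node hD')) (w : List Bool) (hw : IsDyckPath w) :
    motive w hw := by
  match w with
  | [] => exact nil
  | false :: w =>
    have := (isDyckPath_iff.1 hw).2 [false] w rfl
    simp at this
  | true :: w =>
    have h0 := isDyckPath_iff.1 hw
    obtain ⟨D, B, hD, rfl⟩ := exists_isDyckPath_append w (by simp at h0; omega)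
    have hD0 := isDyckPath_iff.1 hD
    have hB : IsDyckPath B := by
      refine isDyckPath_iff.2 ⟨by simpa [hD0.1] using h0.1, fun X Y h => ?_⟩
      simpa [hD0.1] using h0.2 (true :: (D ++ false :: X)) Y (by simp [h])
    exact node D B hD hB (IsDyckPath.rec_node nil node D hD) (IsDyckPath.rec_node nil node B hB)
termination_by w.length
decreasing_by all_goals subst_vars; simp; try omega

theorem upsBeforeDrop_append {C : List Bool} (hC : IsDyckPath C) (h : ℕ) (W : List Bool) :
    upsBeforeDrop h (C ++ W) = C.count true + upsBeforeDrop h W := by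
  induction C, hC using IsDyckPath.rec_node generalizing h W with
  | nil => simp
  | node D D' _ _ ih ih' =>
    simp only [List.cons_append, List.append_assoc, upsBeforeDrop, ih, ih', List.count_cons,
      List.count_append]
    simp
    omega

theorem bracketVector_append {C : List Bool} (hC : IsDyckPath C) (W : List Bool) :
    bracketVector (C ++ W) = bracketVector C ++ bracketVector W := by
  induction C, hC using IsDyckPath.rec_node generalizing W with
  | nil => rfl
  | node D D' hD _ ih ih' =>
    simp [bracketVector, ih, ih', upsBeforeDrop_append hD, upsBeforeDrop]

theorem bracketVector_node {D : List Bool} (hD : IsDyckPath D) (W : List Bool) :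
    bracketVector (true :: (D ++ false :: W)) =
      D.count true :: (bracketVector D ++ bracketVector W) := by
  simp [bracketVector, bracketVector_append hD, upsBeforeDrop_append hD, upsBeforeDrop]

theorem length_bracketVector (w : List Bool) : (bracketVector w).length = w.count true := by
  induction w with
  | nil => rfl
  | cons a w ih => cases a <;> simp [bracketVector, ih]

theorem drop_bracketVector_append (A W : List Bool) :
    (bracketVector (A ++ W)).drop (A.count true) = bracketVector W := by
  induction A with
  | nil => rfl
  | cons a A ih => cases a <;> simp [bracketVector, ih]

theorem bracketVector_replicate_false (k : ℕ) (W : List Bool) :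
    bracketVector (List.replicate k false ++ W) = bracketVector W := by
  induction k with
  | zero => rfl
  | succ k ih => simpa [List.replicate_succ, bracketVector] using ih

theorem bracketVector_injOn {C C' : List Bool} (hC : IsDyckPath C) (hC' : IsDyckPath C')
    (h : bracketVector C = bracketVector C') : C = C' := by
  induction C, hC using IsDyckPath.rec_node generalizing C' with
  | nil =>
    induction C', hC' using IsDyckPath.rec_node with
    | nil => rfl
    | node => simp [bracketVector] at h
  | node D D' hD hD' ih ih' =>
    induction C', hC' using IsDyckPath.rec_node with
    | nil => simp [bracketVector] at h
    | node F F' hF hF' =>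
      rw [bracketVector_node hD, bracketVector_node hF, List.cons.injEq] at h
      obtain ⟨h1, h2⟩ := List.append_inj h.2 (by rw [length_bracketVector, length_bracketVector, h.1])
      rw [ih hF h1, ih' hF' h2]

theorem upsBeforeDrop_move_down {C : List Bool} (hC : IsDyckPath C) (A B : List Bool) (h : ℕ) :
    upsBeforeDrop h (A ++ false :: (C ++ B)) ≤ upsBeforeDrop h (A ++ (C ++ false :: B)) := by
  induction A generalizing h with
  | nil =>
    cases h with
    | zero => simp [upsBeforeDrop]
    | succ h => simp [upsBeforeDrop, upsBeforeDrop_append hC]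
  | cons a A ih =>
    cases a with
    | true => simpa [upsBeforeDrop] using ih (h + 1)
    | false =>
      cases h with
      | zero => simp [upsBeforeDrop]
      | succ h => simpa [upsBeforeDrop] using ih h

theorem bracketVector_le_of_rotation {P Q : List Bool} (h : Rotation IsPrimeDyck P Q) :
    List.Forall₂ (· ≤ ·) (bracketVector P) (bracketVector Q) := by
  obtain ⟨A, C, B, hC, rfl, rfl⟩ := h
  have hC := hC.isDyckPath
  induction A with
  | nil =>
    simp only [List.nil_append, bracketVector, bracketVector_append hC]
    exact List.forall₂_refl _
  | cons a A ih =>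
    cases a with
    | true => exact List.Forall₂.cons (upsBeforeDrop_move_down hC A B 0) ih
    | false => exact ih

theorem forall₂_le_trans {l₁ l₂ l₃ : List ℕ} (h : List.Forall₂ (· ≤ ·) l₁ l₂)
    (h' : List.Forall₂ (· ≤ ·) l₂ l₃) : List.Forall₂ (· ≤ ·) l₁ l₃ := by
  induction h generalizing l₃ with
  | nil => exact h'
  | cons h _ ih =>
    cases h' with
    | cons h' hl => exact .cons (h.trans h') (ih hl)

theorem forall₂_le_antisymm {l₁ l₂ : List ℕ} (h : List.Forall₂ (· ≤ ·) l₁ l₂)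
    (h' : List.Forall₂ (· ≤ ·) l₂ l₁) : l₁ = l₂ := by
  induction h with
  | nil => rfl
  | cons h _ ih =>
    cases h' with
    | cons h' hl => rw [le_antisymm h h', ih hl]

theorem bracketVector_le_of_rotLE {P Q : List Bool} (h : rotLE IsPrimeDyck P Q) :
    List.Forall₂ (· ≤ ·) (bracketVector P) (bracketVector Q) := by
  induction h with
  | refl => exact List.forall₂_refl _
  | tail _ h ih => exact forall₂_le_trans ih (bracketVector_le_of_rotation h)

/-- A prime Dyck word starting inside a Dyck word, not at its end, ends inside it. -/
theorem IsDyckPath.exists_prime_append {Y Z C B B' : List Bool} (h : IsDyckPath (Y ++ Z))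
    (hC : IsPrimeDyck C) (hZ : Z ≠ []) (heq : Z ++ B = C ++ B') : ∃ Z', Z = C ++ Z' := by
  rw [isDyckPath_iff, wordHeight_append] at h
  rcases List.append_eq_append_iff.1 heq with ⟨T, hT, -⟩ | ⟨T, hT, -⟩
  · by_cases hT0 : T = []
    · exact ⟨[], by rw [hT, hT0]; simp⟩
    · have := hC.2.2 Z T hT hZ hT0
      have := h.2 Y Z rfl
      omega
  · exact ⟨T, hT⟩

theorem IsDyckPath.move_down {Y C Z : List Bool} (h : IsDyckPath (Y ++ false :: (C ++ Z))) :
    IsDyckPath (Y ++ (C ++ false :: Z)) := by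
  obtain ⟨h1, h2⟩ := isDyckPath_iff.1 h
  refine isDyckPath_iff.2 ⟨by simp at h1 ⊢; omega, fun X W hX => ?_⟩
  have hmono := dyckLE_move_down Y C Z X.length
  rw [hX, prefHeight_length_append] at hmono
  exact (h2 _ _ (List.take_append_drop X.length _).symm).trans hmono

theorem isExcursionFamily_isPrimeDyck : IsExcursionFamily IsPrimeDyck where
  head := IsPrimeDyck.head
  code := by
    intro C C' B B' hC hC' h
    rcases List.append_eq_append_iff.1 h with ⟨T, hT, -⟩ | ⟨T, hT, -⟩
    · by_cases hT0 : T = []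
      · simp [hT, hT0]
      · have := hC'.2.2 C T hT hC.1 hT0
        rw [hC.2.1] at this
        omega
    · by_cases hT0 : T = []
      · simp [hT, hT0]
      · have := hC.2.2 C' T hT hC'.1 hT0
        rw [hC'.2.1] at this
        omega
  contains := by
    intro A C C' B B' hC hC' hA h
    rcases List.append_eq_append_iff.1 h with ⟨T, hT, -⟩ | ⟨T, rfl, hT⟩
    · exact Or.inl ⟨T, hT⟩
    by_cases hT0 : T = []
    · exact Or.inl ⟨[], by simp [hT0]⟩
    have hApos := hC'.2.2 A T rfl hA hT0
    have hTneg := hC'.2.1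
    rw [wordHeight_append] at hTneg
    have hCd := isDyckPath_iff.1 hC.isDyckPath
    rcases List.append_eq_append_iff.1 hT with ⟨U, rfl, hU⟩ | ⟨U, rfl, -⟩
    · cases U with
      | nil => simp [hCd.1] at hTneg; omega
      | cons a X =>
        simp only [List.cons_append, List.cons.injEq] at hU
        obtain ⟨rfl, -⟩ := hU
        refine Or.inr ⟨X, rfl, ?_⟩
        by_cases hX : X = []
        · subst hX
          refine Or.inr ⟨rfl, by simp, by simp [hCd.1] at hTneg ⊢; omega, fun V W h hV hW => ?_⟩
          rcases List.eq_nil_or_concat W with rfl | ⟨W, b, rfl⟩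
          · exact (hW rfl).elim
          rw [List.concat_eq_append, ← List.append_assoc] at h
          exact hC'.2.2 V (W ++ (C ++ [false])) (by rw [(List.append_inj' h rfl).1]; simp) hV
            (by simp)
        · left
          refine ⟨by simp, by simp at hTneg ⊢; omega, fun V W h hV hW => ?_⟩
          rcases List.append_eq_append_iff.1 h with ⟨S, rfl, hS⟩ | ⟨S, rfl, hS⟩
          · cases S with
            | nil => simpa using hApos
            | cons a S =>
              simp only [List.cons_append, List.cons.injEq] at hS
              obtain ⟨rfl, hS⟩ := hS
              have h1 := hC'.2.2 (A ++ (C ++ [false])) X (by simp) (by simp) hX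
              simp [hCd.1] at h1
              rcases List.append_eq_append_iff.1 hS with ⟨R, rfl, rfl⟩ | ⟨R, rfl, -⟩
              · have := hC'.2.2 (A ++ (C ++ false :: R)) W (by simp) (by simp) hW
                simp at this ⊢
                omega
              · have := hCd.2 S R rfl
                simp
                omega
          · exact hC'.2.2 V (S ++ (C ++ false :: X)) (by simp) hV (by simp)
    · have := hCd.2 T U rfl
      omega
  inside := by
    intro Y Z C' B B' hC hC' hZ h
    have hpos := hC.2.2 (Y ++ [false]) Z (by simp) (by simp) hZ
    simp only [wordHeight_append, wordHeight_cons_false, wordHeight_nil] at hpos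
    obtain ⟨Z', rfl⟩ := IsDyckPath.exists_prime_append (Y := Y ++ [false])
      (by simpa using hC.isDyckPath) hC' hZ h
    refine ⟨Z', rfl, by simp, by have := hC.2.1; simp at this ⊢; omega, fun V W h hV hW => ?_⟩
    rcases List.append_eq_append_iff.1 h with ⟨S, rfl, hS⟩ | ⟨S, rfl, -⟩
    · rcases List.append_eq_append_iff.1 hS with ⟨R, rfl, hR⟩ | ⟨R, rfl, -⟩
      · cases R with
        | nil => simp [hC'.2.1]; omega
        | cons a R =>
          simp only [List.cons_append, List.cons.injEq] at hR
          obtain ⟨rfl, rfl⟩ := hR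
          have := hC.2.2 (Y ++ false :: (C' ++ R)) W (by simp) (by simp) hW
          simp at this ⊢
          omega
      · have := (isDyckPath_iff.1 hC'.isDyckPath).2 S R rfl
        simp
        omega
    · exact hC.2.2 V (S ++ false :: (C' ++ Z')) (by simp) hV (by simp)
  absorb := by
    intro F C hF hC
    obtain ⟨D, hD, hFD⟩ := isPrimeDyck_iff.1 hF
    rw [← List.cons_append] at hFD
    obtain rfl := (List.append_inj' hFD rfl).1
    exact isPrimeDyck_iff.2 ⟨D ++ C, hD.append hC.isDyckPath, by simp⟩
  not_le := by
    intro Cs A X Z C' B B' k hCs hC' h hZ heq hle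
    have hM := isDyckPath_flatten hCs
    rw [h] at hM hle
    obtain ⟨Z', rfl⟩ := IsDyckPath.exists_prime_append (Y := X ++ [false]) (by simpa using hM)
      hC' hZ heq
    have hM' := hM.move_down
    have hB : B' = Z' ++ B := by simpa using heq.symm
    subst hB
    have h1 := bracketVector_le_of_rotation
      (⟨X, C', Z', hC', rfl, rfl⟩ : Rotation IsPrimeDyck _ _)
    have h2 := List.forall₂_drop (A.count true) (bracketVector_le_of_rotLE hle)
    rw [drop_bracketVector_append, drop_bracketVector_append, bracketVector_replicate_false,
      show X ++ (C' ++ false :: (Z' ++ B)) = (X ++ (C' ++ false :: Z')) ++ B by simp,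
      bracketVector_append hM', bracketVector_append hM, bracketVector_replicate_false] at h2
    have h3 := List.forall₂_take (bracketVector (X ++ (C' ++ false :: Z'))).length h2
    rw [List.take_left, List.take_left' h1.length_eq] at h3
    have := bracketVector_injOn hM hM' (forall₂_le_antisymm h1 h3)
    obtain ⟨D, rfl⟩ := hC'.head
    simp at this

theorem elev_one_eq (w : List Bool) (p m : ℕ) (h : p + m ≤ w.length) :
    elev (fun _ => 1) w p (p + m) = wordHeight ((w.drop p).take m) := by
  induction m with
  | zero => simp [elev]
  | succ m ih =>
    have hm : m < (w.drop p).length := by simp; omega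
    have hget : (w.drop p)[m] = w[p + m] := List.getElem_drop
    rw [elev, ← add_assoc, Finset.sum_Ico_succ_top (by omega), ← elev, ih (by omega),
      ← List.take_append_getElem hm, wordHeight_append, hget, stepVal,
      List.getD_eq_getElem _ _ (by omega)]
    cases w[p + m] <;> simp

theorem isPrimeDyck_of_ne_zero {C : List Bool} (hhead : C.getD 0 false = true)
    (h0 : wordHeight C = 0) (h : ∀ m, 0 < m → m < C.length → wordHeight (C.take m) ≠ 0) :
    IsPrimeDyck C := by
  have hpos : ∀ m, 0 < m → m < C.length → 0 < wordHeight (C.take m) := by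
    intro m hm
    induction m, hm using Nat.le_induction with
    | base =>
      intro _
      cases C with
      | nil => simp at hhead
      | cons a C => simp at hhead; simp [hhead]
    | succ m hm ih =>
      intro hlt
      have h1 := ih (by omega)
      have h2 := h (m + 1) (by omega) hlt
      have hm' : m < C.length := by omega
      rw [← List.take_append_getElem hm', wordHeight_append] at h2 ⊢
      generalize C[m] = b at h2 ⊢
      cases b <;> simp at h2 ⊢ <;> omega
  refine ⟨by rintro rfl; simp at hhead, h0, ?_⟩
  rintro X Y rfl hX hY
  have := hpos X.length (List.length_pos_iff.2 hX) (by simpa using List.length_pos_iff.2 hY)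
  simpa using this

theorem deltaRot_one_iff {P Q : List Bool} :
    DeltaRot (fun _ => 1) P Q ↔ Rotation IsPrimeDyck P Q := by
  have hdrop : ∀ A W : List Bool, (A ++ false :: W).drop (A.length + 1) = W := by
    intro A W
    rw [show A ++ false :: W = (A ++ [false]) ++ W by simp,
      List.drop_left' (by simp)]
  have hgetD : ∀ A W : List Bool, (A ++ false :: W).getD (A.length + 1) false = W.getD 0 false := by
    intro A W
    rw [List.getD_append_right _ _ _ _ (by omega)]
    simp
  constructor
  · rintro ⟨A, C, B, rfl, rfl, hu, m, hm, hle, hC, h0, hne⟩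
    rw [elev_one_eq _ _ _ hle, hdrop] at h0
    rw [hdrop] at hC
    rw [hgetD] at hu
    have hlen : C.length = m := by
      have := congrArg List.length hC
      simp at this hle
      omega
    refine ⟨A, C, B, isPrimeDyck_of_ne_zero ?_ (by rwa [← hC] at h0) fun m' hm' hlt => ?_,
      rfl, rfl⟩
    · cases C with
      | nil => simp at hlen; omega
      | cons a C => simpa using hu
    · have := hne m' hm' (by omega)
      rwa [elev_one_eq _ _ _ (by omega), hdrop, List.take_append_of_le_length hlt.le] at this
  · rintro ⟨A, C, B, hC, rfl, rfl⟩
    have hlen : 0 < C.length := List.length_pos_iff.2 hC.1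
    refine ⟨A, C, B, rfl, rfl, ?_, C.length, hlen, by simp; omega, ?_, ?_, fun m hm hlt => ?_⟩
    · obtain ⟨C', rfl⟩ := hC.head
      rw [hgetD]
      rfl
    · rw [hdrop, List.take_left]
    · rw [elev_one_eq _ _ _ (by simp; omega), hdrop, List.take_left, hC.2.1]
    · rw [elev_one_eq _ _ _ (by simp; omega), hdrop, List.take_append_of_le_length hlt.le]
      refine (hC.2.2 _ _ (List.take_append_drop m C).symm ?_ ?_).ne'
      · simp [hm.ne', hC.1]
      · simpa using hlt

theorem tamLE_eq_rotLE : tamLE = rotLE IsPrimeDyck := by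
  have : DeltaRot (fun _ => 1) = Rotation IsPrimeDyck := by
    ext P Q
    exact deltaRot_one_iff
  rw [tamLE, altLE, rotLE, this]

/-! ### Counting left and right pairs -/

theorem isDyckWord_iff_append {n : ℕ} {w : List Bool} : IsDyckWord n w ↔
    w.count true = n ∧ w.count false = n ∧ ∀ X Y, w = X ++ Y → 0 ≤ wordHeight X := by
  refine and_congr_right fun _ => and_congr_right fun _ => ⟨fun h X Y hw => ?_, fun h p hp => ?_⟩
  · have := h X ⟨Y, hw.symm⟩
    simp only [wordHeight]
    omega
  · obtain ⟨t, rfl⟩ := hp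
    have := h p t rfl
    simp only [wordHeight] at this
    omega

/-- Inserting a Dyck word in a word, or removing it, does not affect whether all prefixes have
nonnegative height. -/
theorem prefixes_nonneg_insert_iff {X : List Bool} (hX : IsDyckPath X) (A B : List Bool) :
    (∀ V W, A ++ (X ++ B) = V ++ W → 0 ≤ wordHeight V) ↔
      ∀ V W, A ++ B = V ++ W → 0 ≤ wordHeight V := by
  obtain ⟨h0, h1⟩ := isDyckPath_iff.1 hX
  constructor
  · intro h V W hVW
    rcases List.append_eq_append_iff.1 hVW with ⟨T, rfl, rfl⟩ | ⟨T, rfl, rfl⟩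
    · simpa [h0] using h (A ++ (X ++ T)) W (by simp)
    · exact h V (T ++ (X ++ B)) (by simp)
  · intro h V W hVW
    rcases List.append_eq_append_iff.1 hVW with ⟨T, rfl, hT⟩ | ⟨T, rfl, -⟩
    · rcases List.append_eq_append_iff.1 hT with ⟨S, rfl, rfl⟩ | ⟨S, rfl, -⟩
      · simpa [h0] using h (A ++ S) W (by simp)
      · have := h1 T S rfl
        have := h A B rfl
        simp
        omega
    · exact h V (T ++ B) (by simp)

theorem mem_dyckSet_replace {n : ℕ} {X Y : List Bool} (hX : IsDyckPath X) (hY : IsDyckPath Y)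
    (hXY : X.Perm Y) (A B : List Bool) :
    A ++ (X ++ B) ∈ DyckSet n ↔ A ++ (Y ++ B) ∈ DyckSet n := by
  change IsDyckWord _ _ ↔ IsDyckWord _ _
  rw [isDyckWord_iff_append, isDyckWord_iff_append, prefixes_nonneg_insert_iff hX,
    prefixes_nonneg_insert_iff hY]
  simp only [List.count_append, hXY.count_eq]

/-- The product of the words `D d`, for `D` in a list of words. -/
def descents (Ds : List (List Bool)) : List Bool := (Ds.map fun D => D ++ [false]).flatten

/-- The product of the words `u D d`, for `D` in a list of words. -/
def arches (Ds : List (List Bool)) : List Bool :=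
  (Ds.map fun D => true :: (D ++ [false])).flatten

theorem descents_cons (D : List Bool) (Ds : List (List Bool)) :
    descents (D :: Ds) = D ++ false :: descents Ds := by simp [descents]

theorem arches_cons (D : List Bool) (Ds : List (List Bool)) :
    arches (D :: Ds) = true :: (D ++ false :: arches Ds) := by simp [arches]

theorem isDyckPath_arches {Ds : List (List Bool)} (h : ∀ D ∈ Ds, IsDyckPath D) :
    IsDyckPath (arches Ds) := by
  induction Ds with
  | nil => exact isDyckPath_nil
  | cons D Ds ih =>
    rw [arches_cons]
    exact (h D (by simp)).node (ih fun D' hD' => h D' (by simp [hD']))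

theorem isDyckPath_replicate_descents {Ds : List (List Bool)} (h : ∀ D ∈ Ds, IsDyckPath D) :
    IsDyckPath (List.replicate Ds.length true ++ descents Ds) := by
  induction Ds with
  | nil => exact isDyckPath_nil
  | cons D Ds ih =>
    have hD := (h D (by simp)).node isDyckPath_nil
    obtain ⟨h0, h1⟩ := isDyckPath_iff.1 (ih fun D' hD' => h D' (by simp [hD']))
    rw [List.length_cons, descents_cons, List.replicate_succ', List.append_assoc,
      show [true] ++ (D ++ false :: descents Ds) = true :: (D ++ [false]) ++ descents Ds by simp]
    refine isDyckPath_iff.2 ⟨?_, (prefixes_nonneg_insert_iff hD _ _).2 h1⟩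
    have := (isDyckPath_iff.1 hD).1
    simp only [wordHeight_append] at h0 ⊢
    rw [this]
    omega

theorem replicate_descents_perm_arches (Ds : List (List Bool)) :
    (List.replicate Ds.length true ++ descents Ds).Perm (arches Ds) := by
  rw [List.perm_iff_count]
  intro b
  induction Ds with
  | nil => rfl
  | cons D Ds ih =>
    simp only [List.length_cons, List.replicate_succ, descents_cons, arches_cons, List.count_append,
      List.count_cons, List.cons_append] at ih ⊢
    omega

theorem descents_append_inj {Ds Ds' : List (List Bool)} {B B' : List Bool}
    (hDs : ∀ D ∈ Ds, IsDyckPath D) (hDs' : ∀ D ∈ Ds', IsDyckPath D)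
    (hlen : Ds.length = Ds'.length) (h : descents Ds ++ B = descents Ds' ++ B') :
    Ds = Ds' ∧ B = B' := by
  induction Ds generalizing Ds' with
  | nil =>
    obtain rfl := List.length_eq_zero_iff.1 hlen.symm
    exact ⟨rfl, h⟩
  | cons D Ds ih =>
    obtain ⟨D', Ds', rfl⟩ := List.exists_cons_of_length_eq_add_one hlen.symm
    simp only [descents_cons, List.append_assoc, List.cons_append] at h
    obtain ⟨rfl, h'⟩ := dyck_append_false_inj (hDs D (by simp)) (hDs' D' (by simp)) h
    obtain ⟨rfl, rfl⟩ := ih (fun D hD => hDs D (by simp [hD])) (fun D hD => hDs' D (by simp [hD]))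
      (by simpa using hlen) h'
    exact ⟨rfl, rfl⟩

theorem arches_append_inj {Ds Ds' : List (List Bool)} {B B' : List Bool}
    (hDs : ∀ D ∈ Ds, IsDyckPath D) (hDs' : ∀ D ∈ Ds', IsDyckPath D)
    (hlen : Ds.length = Ds'.length) (h : arches Ds ++ B = arches Ds' ++ B') :
    Ds = Ds' ∧ B = B' := by
  induction Ds generalizing Ds' with
  | nil =>
    obtain rfl := List.length_eq_zero_iff.1 hlen.symm
    exact ⟨rfl, h⟩
  | cons D Ds ih =>
    obtain ⟨D', Ds', rfl⟩ := List.exists_cons_of_length_eq_add_one hlen.symm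
    simp only [arches_cons, List.append_assoc, List.cons_append, List.cons.injEq, true_and] at h
    obtain ⟨rfl, h'⟩ := dyck_append_false_inj (hDs D (by simp)) (hDs' D' (by simp)) h
    obtain ⟨rfl, rfl⟩ := ih (fun D hD => hDs D (by simp [hD])) (fun D hD => hDs' D (by simp [hD]))
      (by simpa using hlen) h'
    exact ⟨rfl, rfl⟩

theorem exists_descents_append (k : ℕ) (R : List Bool) (h : wordHeight R ≤ -k) :
    ∃ Ds B, Ds.length = k ∧ (∀ D ∈ Ds, IsDyckPath D) ∧ R = descents Ds ++ B := by
  induction k generalizing R with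
  | zero => exact ⟨[], R, rfl, by simp, rfl⟩
  | succ k ih =>
    push_cast at h
    obtain ⟨D, B, hD, rfl⟩ := exists_isDyckPath_append R (by omega)
    rw [wordHeight_append, wordHeight_cons_false, (isDyckPath_iff.1 hD).1] at h
    obtain ⟨Ds, B', hlen, hDs, rfl⟩ := ih B (by omega)
    exact ⟨D :: Ds, B', by simp [hlen], by simpa using ⟨hD, hDs⟩, by simp [descents_cons]⟩

theorem exists_flatten_eq_arches {Cs : List (List Bool)} (h : ∀ C ∈ Cs, IsPrimeDyck C) :
    ∃ Ds : List (List Bool), Ds.length = Cs.length ∧ (∀ D ∈ Ds, IsDyckPath D) ∧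
      Cs.flatten = arches Ds := by
  induction Cs with
  | nil => exact ⟨[], rfl, by simp, rfl⟩
  | cons C Cs ih =>
    obtain ⟨Ds, hlen, hDs, heq⟩ := ih fun C' hC' => h C' (by simp [hC'])
    obtain ⟨D, hD, rfl⟩ := isPrimeDyck_iff.1 (h C (by simp))
    exact ⟨D :: Ds, by simp [hlen], by simpa using ⟨hD, hDs⟩, by simp [arches_cons, heq]⟩

theorem wordHeight_suffix_le {n : ℕ} {V W : List Bool} (h : V ++ W ∈ DyckSet n) :
    wordHeight W ≤ 0 := by
  have h' := isDyckWord_iff_append.1 h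
  have hV := h'.2.2 V W rfl
  have : wordHeight (V ++ W) = 0 := by simp only [wordHeight, h'.1, h'.2.1, sub_self]
  rw [wordHeight_append] at this
  omega

/-- Left pairs are as numerous in the Tamari lattice as in the Dyck lattice. -/
theorem ncard_isLeftPair (n : ℕ) {k : ℕ} (hk : 0 < k) :
    {pq : List Bool × List Bool | pq.1 ∈ DyckSet n ∧ IsLeftPair IsPrimeDyck k pq.1 pq.2}.ncard =
      {pq : List Bool × List Bool | pq.1 ∈ DyckSet n ∧ IsLeftPair IsUpStep k pq.1 pq.2}.ncard := by
  obtain ⟨k, rfl⟩ := Nat.exists_eq_add_one_of_ne_zero hk.ne'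
  let I : Set (List Bool × List Bool × List Bool) := {t | IsDyckPath t.2.1 ∧
    t.1 ++ (List.replicate (k + 1) false ++ true :: (t.2.1 ++ false :: t.2.2)) ∈ DyckSet n}
  let f : List Bool × List Bool × List Bool → List Bool × List Bool := fun t =>
    (t.1 ++ (List.replicate (k + 1) false ++ true :: (t.2.1 ++ false :: t.2.2)),
      t.1 ++ true :: (t.2.1 ++ false :: (List.replicate (k + 1) false ++ t.2.2)))
  let g : List Bool × List Bool × List Bool → List Bool × List Bool := fun t =>
    (t.1 ++ (List.replicate (k + 1) false ++ true :: (t.2.1 ++ false :: t.2.2)),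
      t.1 ++ true :: (List.replicate (k + 1) false ++ (t.2.1 ++ false :: t.2.2)))
  have hf : Set.InjOn f I := by
    rintro ⟨A, D, B⟩ ⟨hD, -⟩ ⟨A', D', B'⟩ ⟨hD', -⟩ h
    simp only [f, Prod.mk.injEq, List.replicate_succ, List.cons_append] at h hD hD'
    obtain ⟨rfl, h1, -⟩ := eq_of_first_difference h.1 h.2
    simp only [List.append_cancel_left_eq, List.cons.injEq, true_and] at h1
    obtain ⟨rfl, rfl⟩ := dyck_append_false_inj hD hD' h1
    rfl
  have hg : Set.InjOn g I := by
    rintro ⟨A, D, B⟩ ⟨hD, -⟩ ⟨A', D', B'⟩ ⟨hD', -⟩ h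
    simp only [g, Prod.mk.injEq, List.replicate_succ, List.cons_append] at h hD hD'
    obtain ⟨rfl, h1, -⟩ := eq_of_first_difference h.1 h.2
    simp only [List.append_cancel_left_eq, List.cons.injEq, true_and] at h1
    obtain ⟨rfl, rfl⟩ := dyck_append_false_inj hD hD' h1
    rfl
  have hfI : {pq : List Bool × List Bool | pq.1 ∈ DyckSet n ∧
      IsLeftPair IsPrimeDyck (k + 1) pq.1 pq.2} = f '' I := by
    ext ⟨P, Q⟩
    constructor
    · rintro ⟨hP, A, C, B, hC, rfl, rfl⟩
      obtain ⟨D, hD, rfl⟩ := isPrimeDyck_iff.1 hC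
      exact ⟨(A, D, B), ⟨hD, by simpa using hP⟩, by simp [f]⟩
    · rintro ⟨⟨A, D, B⟩, ⟨hD, hP⟩, h⟩
      obtain ⟨rfl, rfl⟩ := Prod.mk.inj h
      exact ⟨hP, A, true :: (D ++ [false]), B, isPrimeDyck_iff.2 ⟨D, hD, rfl⟩, by simp, by simp⟩
  have hgI : {pq : List Bool × List Bool | pq.1 ∈ DyckSet n ∧
      IsLeftPair IsUpStep (k + 1) pq.1 pq.2} = g '' I := by
    ext ⟨P, Q⟩
    constructor
    · rintro ⟨hP, A, C, R, rfl, rfl, rfl⟩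
      have hR : wordHeight R < 0 := by
        have := wordHeight_suffix_le (V := A ++ List.replicate (k + 1) false) (W := true :: R)
          (by simpa using hP)
        rw [wordHeight_cons_true] at this
        omega
      obtain ⟨D, B, hD, rfl⟩ := exists_isDyckPath_append R hR
      exact ⟨(A, D, B), ⟨hD, by simpa using hP⟩, by simp [g]⟩
    · rintro ⟨⟨A, D, B⟩, ⟨hD, hP⟩, h⟩
      obtain ⟨rfl, rfl⟩ := Prod.mk.inj h
      exact ⟨hP, A, [true], D ++ false :: B, rfl, by simp, by simp⟩
  rw [hfI, hgI, hf.ncard_image, hg.ncard_image]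

/-- Right pairs are as numerous in the Tamari lattice as in the Dyck lattice. -/
theorem ncard_isRightPair (n : ℕ) {k : ℕ} (hk : 0 < k) :
    {pq : List Bool × List Bool | pq.1 ∈ DyckSet n ∧ IsRightPair IsPrimeDyck k pq.1 pq.2}.ncard =
      {pq : List Bool × List Bool | pq.1 ∈ DyckSet n ∧
        IsRightPair IsUpStep k pq.1 pq.2}.ncard := by
  obtain ⟨k, rfl⟩ := Nat.exists_eq_add_one_of_ne_zero hk.ne'
  let I : Set (List Bool × List (List Bool) × List Bool) := {t | t.2.1.length = k + 1 ∧
    (∀ D ∈ t.2.1, IsDyckPath D) ∧ t.1 ++ false :: (arches t.2.1 ++ t.2.2) ∈ DyckSet n}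
  let f : List Bool × List (List Bool) × List Bool → List Bool × List Bool := fun t =>
    (t.1 ++ false :: (arches t.2.1 ++ t.2.2), t.1 ++ (arches t.2.1 ++ false :: t.2.2))
  let g : List Bool × List (List Bool) × List Bool → List Bool × List Bool := fun t =>
    (t.1 ++ false :: (List.replicate (k + 1) true ++ (descents t.2.1 ++ t.2.2)),
      t.1 ++ (List.replicate (k + 1) true ++ false :: (descents t.2.1 ++ t.2.2)))
  have hf : Set.InjOn f I := by
    rintro ⟨A, Ds, B⟩ ⟨hlen, hDs, -⟩ ⟨A', Ds', B'⟩ ⟨hlen', hDs', -⟩ h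
    simp only [f, Prod.mk.injEq] at h hlen hlen' hDs hDs'
    obtain ⟨D, Es, rfl⟩ := List.exists_cons_of_length_eq_add_one hlen
    obtain ⟨D', Es', rfl⟩ := List.exists_cons_of_length_eq_add_one hlen'
    have h2 := h.2
    rw [arches_cons, arches_cons, List.cons_append, List.cons_append] at h2
    obtain ⟨rfl, h1, -⟩ := eq_of_first_difference h.1 h2
    obtain ⟨h3, rfl⟩ := arches_append_inj hDs hDs' (hlen.trans hlen'.symm) h1
    rw [h3]
  have hg : Set.InjOn g I := by
    rintro ⟨A, Ds, B⟩ ⟨hlen, hDs, -⟩ ⟨A', Ds', B'⟩ ⟨hlen', hDs', -⟩ h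
    simp only [g, Prod.mk.injEq] at h hlen hlen' hDs hDs'
    have h2 := h.2
    rw [List.replicate_succ, List.cons_append, List.cons_append] at h2
    obtain ⟨rfl, h1, -⟩ := eq_of_first_difference h.1 h2
    rw [List.append_cancel_left_eq] at h1
    obtain ⟨rfl, rfl⟩ := descents_append_inj hDs hDs' (hlen.trans hlen'.symm) h1
    rfl
  have hfI : {pq : List Bool × List Bool | pq.1 ∈ DyckSet n ∧
      IsRightPair IsPrimeDyck (k + 1) pq.1 pq.2} = f '' I := by
    ext ⟨P, Q⟩
    constructor
    · rintro ⟨hP, A, Cs, B, hlen, hCs, rfl, rfl⟩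
      obtain ⟨Ds, hlen', hDs, heq⟩ := exists_flatten_eq_arches hCs
      exact ⟨(A, Ds, B), ⟨hlen'.trans hlen, hDs, by simpa [heq] using hP⟩, by simp [f, heq]⟩
    · rintro ⟨⟨A, Ds, B⟩, ⟨hlen, hDs, hP⟩, h⟩
      obtain ⟨rfl, rfl⟩ := Prod.mk.inj h
      refine ⟨hP, A, Ds.map fun D => true :: (D ++ [false]), B, by simpa using hlen, ?_, rfl, rfl⟩
      intro C hC
      obtain ⟨D, hD, rfl⟩ := List.mem_map.1 hC
      exact isPrimeDyck_iff.2 ⟨D, hDs D hD, rfl⟩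
  have hmem : ∀ (A : List Bool) (Ds : List (List Bool)) (B : List Bool), Ds.length = k + 1 →
      (∀ D ∈ Ds, IsDyckPath D) →
      (A ++ false :: (List.replicate (k + 1) true ++ (descents Ds ++ B)) ∈ DyckSet n ↔
        A ++ false :: (arches Ds ++ B) ∈ DyckSet n) := by
    intro A Ds B hlen hDs
    have := mem_dyckSet_replace (n := n) (isDyckPath_replicate_descents hDs)
      (isDyckPath_arches hDs) (replicate_descents_perm_arches Ds) (A ++ [false]) B
    simpa [hlen] using this
  have hgI : {pq : List Bool × List Bool | pq.1 ∈ DyckSet n ∧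
      IsRightPair IsUpStep (k + 1) pq.1 pq.2} = g '' I := by
    ext ⟨P, Q⟩
    constructor
    · rintro ⟨hP, A, Cs, R, hlen, hCs, rfl, rfl⟩
      have hflat : Cs.flatten = List.replicate (k + 1) true := by
        rw [List.eq_replicate_of_mem hCs, hlen, List.flatten_replicate_singleton]
      simp only [hflat] at hP ⊢
      have hR : wordHeight R ≤ -((k + 1 : ℕ) : ℤ) := by
        have := wordHeight_suffix_le (V := A ++ [false]) (W := List.replicate (k + 1) true ++ R)
          (by simpa using hP)
        simp only [wordHeight, List.count_append, List.count_replicate] at this ⊢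
        simp at this ⊢
        omega
      obtain ⟨Ds, B, hlen', hDs, rfl⟩ := exists_descents_append (k + 1) R hR
      exact ⟨(A, Ds, B), ⟨hlen', hDs, (hmem A Ds B hlen' hDs).1 hP⟩, rfl⟩
    · rintro ⟨⟨A, Ds, B⟩, ⟨hlen, hDs, hP⟩, h⟩
      obtain ⟨rfl, rfl⟩ := Prod.mk.inj h
      refine ⟨(hmem A Ds B hlen hDs).2 hP, A, List.replicate (k + 1) [true], descents Ds ++ B,
        by simp, fun C hC => List.eq_of_mem_replicate hC, ?_, ?_⟩ <;>
      rw [List.flatten_replicate_singleton]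
  rw [hfI, hgI, hf.ncard_image, hg.ncard_image]

theorem finite_dyckSet (n : ℕ) : (DyckSet n).Finite :=
  (List.finite_length_eq Bool (n + n)).subset fun w hw => by
    rw [Set.mem_ofPred_eq, ← List.count_true_add_count_false w, hw.1, hw.2.1]

theorem isRightPair_one_iff {E : List Bool → Prop} {P Q : List Bool} :
    IsRightPair E 1 P Q ↔ IsLeftPair E 1 P Q := by
  constructor
  · rintro ⟨A, Cs, B, hlen, hCs, rfl, rfl⟩
    obtain ⟨C, rfl⟩ := List.length_eq_one_iff.1 hlen
    exact ⟨A, C, B, hCs C (by simp), by simp, by simp⟩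
  · rintro ⟨A, C, B, hC, rfl, rfl⟩
    exact ⟨A, [C], B, rfl, by simpa using hC, by simp, by simp⟩

theorem IsExcursionFamily.not_isLeftPair_and_isRightPair {E : List Bool → Prop}
    (hE : IsExcursionFamily E) {k : ℕ} {P Q : List Bool} (hL : IsLeftPair E (k + 2) P Q)
    (hR : IsRightPair E (k + 2) P Q) : False := by
  obtain ⟨A, C, B, hC, rfl, rfl⟩ := hL
  obtain ⟨A', Cs, B', hlen, hCs, hP, hQ⟩ := hR
  obtain ⟨C', Cs, rfl⟩ := List.exists_cons_of_length_eq_add_one hlen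
  obtain ⟨D, rfl⟩ := hE.head hC
  obtain ⟨D', rfl⟩ := hE.head (hCs C' (by simp))
  have h := (eq_of_first_difference hP hQ).2.1
  simp [List.replicate_succ] at h

/-- The number of linear intervals of positive height is the number of left and right pairs, which
coincide in height one and are distinct in larger heights. -/
theorem IsExcursionFamily.ncard_linearInterval {E : List Bool → Prop} (hE : IsExcursionFamily E)
    (n k : ℕ) (hk : 0 < k) :
    {pq : List Bool × List Bool | LinearInterval (DyckSet n) (rotLE E) pq.1 pq.2 ∧
        IntervalHeight (DyckSet n) (rotLE E) pq.1 pq.2 k}.ncard =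
      {pq : List Bool × List Bool | pq.1 ∈ DyckSet n ∧ IsLeftPair E k pq.1 pq.2}.ncard +
        if k = 1 then 0 else
          {pq : List Bool × List Bool | pq.1 ∈ DyckSet n ∧ IsRightPair E k pq.1 pq.2}.ncard := by
  have hunion : {pq : List Bool × List Bool | LinearInterval (DyckSet n) (rotLE E) pq.1 pq.2 ∧
        IntervalHeight (DyckSet n) (rotLE E) pq.1 pq.2 k} =
      {pq : List Bool × List Bool | pq.1 ∈ DyckSet n ∧ IsLeftPair E k pq.1 pq.2} ∪
        {pq : List Bool × List Bool | pq.1 ∈ DyckSet n ∧ IsRightPair E k pq.1 pq.2} := by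
    ext pq
    simp only [Set.mem_ofPred_eq, Set.mem_union, hE.linearInterval_iff, hk, hk.ne', true_and,
      false_and, false_or, and_or_left]
  rw [hunion]
  split_ifs with h1
  · subst h1
    simp only [isRightPair_one_iff, Set.union_self, add_zero]
  · obtain ⟨k, rfl⟩ : ∃ j, k = j + 2 := ⟨k - 2, by omega⟩
    have hfin := (finite_dyckSet n).prod (finite_dyckSet n)
    refine Set.ncard_union_eq ?_ (hfin.subset ?_) (hfin.subset ?_)
    · rw [Set.disjoint_left]
      exact fun pq hL hR => hE.not_isLeftPair_and_isRightPair hL.2 hR.2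
    · exact fun pq h =>
        ⟨h.1, (hE.uniquePath_of_isLeftPair h.2).rotLE.mem_dyckSet h.1⟩
    · exact fun pq h =>
        ⟨h.1, (hE.uniquePath_of_isRightPair h.2).rotLE.mem_dyckSet h.1⟩

/-- the Tamari lattice and the Dyck lattice of size `n` have the same
number of linear intervals of any given height `k`. -/
theorem stmt2 (n : ℕ) (hn : 1 ≤ n) (k : ℕ) :
    {pq : List Bool × List Bool |
        LinearInterval (DyckSet n) (tamLE) pq.1 pq.2 ∧
          IntervalHeight (DyckSet n) (tamLE) pq.1 pq.2 (k)}.ncard = {pq : List Bool × List Bool |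
        LinearInterval (DyckSet n) (dyckLE) pq.1 pq.2 ∧
          IntervalHeight (DyckSet n) (dyckLE) pq.1 pq.2 (k)}.ncard := by
  simp only [linearInterval_congr fun P hP Q hQ => dyckLE_iff_rotLE (n := n) hP hQ,
    intervalHeight_congr fun P hP Q hQ => dyckLE_iff_rotLE (n := n) hP hQ, tamLE_eq_rotLE]
  rcases Nat.eq_zero_or_pos k with rfl | hk
  · simp only [isExcursionFamily_isPrimeDyck.linearInterval_iff,
      isExcursionFamily_isUpStep.linearInterval_iff, lt_irrefl, true_and, false_and, or_false]
  · rw [isExcursionFamily_isPrimeDyck.ncard_linearInterval n k hk,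
      isExcursionFamily_isUpStep.ncard_linearInterval n k hk, ncard_isLeftPair n hk,
      ncard_isRightPair n hk]
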